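/- arXiv:2411.15107 — 2 statements merged into one kernel-verified Lean document; each statement's English description precedes it below -/
import Mathlib

section
/- Let M be a complete pointed metric space such that every compact subset of M is contained in a compact Lipschitz retract of M (i.e., a compact set L ⊂ M for which there is a Lipschitz map π : M → L with π(x) = x for all x ∈ L). Then property (V*) is compactly determined for F(M): if F(K∪{0}) has property (V*) for every compact K ⊂ M, then F(M) has property (V*). -/
open Filter Topology Metric Set

noncomputable section

/-- A formal series `∑ yₙ` in a normed space `Y` is weakly unconditionally Cauchy (WUC)
if `∑ |⟨φ, yₙ⟩| < ∞` for every continuous linear functional `φ` on `Y`. -/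
def IsWUC {Y : Type*} [SeminormedAddCommGroup Y] [NormedSpace ℝ Y] (y : ℕ → Y) : Prop :=
  ∀ φ : Y →L[ℝ] ℝ, Summable fun n => |φ (y n)|

/-- `Γ` is a (V*)-set in `X`: for every WUC series `∑ fₙ` in the dual `X*`,
`sup_{x ∈ Γ} |⟨x, fₙ⟩| → 0`. -/
def IsVStarSet {X : Type*} [SeminormedAddCommGroup X] [NormedSpace ℝ X] (Γ : Set X) : Prop :=
  ∀ f : ℕ → (X →L[ℝ] ℝ), IsWUC f →
    ∀ ε > (0 : ℝ), ∀ᶠ n in atTop, ∀ x ∈ Γ, |f n x| ≤ ε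

/-- `Γ` is relatively weakly compact: its closure in the weak topology is compact. -/
def RelWeaklyCompact {X : Type*} [SeminormedAddCommGroup X] [NormedSpace ℝ X]
    (Γ : Set X) : Prop :=
  IsCompact (closure ((toWeakSpace ℝ X) '' Γ))

/-- A normed space has Pełczyński's property (V*) if every (V*)-set is relatively
weakly compact. -/
def HasPropertyVStar (X : Type*) [SeminormedAddCommGroup X] [NormedSpace ℝ X] : Prop :=
  ∀ Γ : Set X, IsVStarSet Γ → RelWeaklyCompact Γ

/-- `F`, together with the map `δ : M → F`, is (a realization of) the Lipschitz-free space
over the pointed metric space `(M, o)`: `δ` is a base-point-preserving isometric embedding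
whose range has dense linear span, and every Lipschitz function `f : M → ℝ` vanishing at
the base point lifts to a continuous linear functional of norm at most `Lip(f)` (this
characterizes `F(M)`, with dual `Lip₀(M)`, up to isometric isomorphism). -/
structure IsLipschitzFree {M : Type*} [MetricSpace M] (o : M)
    {F : Type*} [NormedAddCommGroup F] [NormedSpace ℝ F] (δ : M → F) : Prop where
  isometry : Isometry δ
  map_base : δ o = 0
  dense_span : Dense (Submodule.span ℝ (Set.range δ) : Set F)
  lift : ∀ (L : NNReal) (f : M → ℝ), LipschitzWith L f → f o = 0 →
    ∃ φ : F →L[ℝ] ℝ, ‖φ‖ ≤ L ∧ ∀ x, φ (δ x) = f x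

/-- The subspace of `F` corresponding to the Lipschitz-free space `F(S)` over a subset
`S ⊆ M`: the closed linear span of `δ(S)`. -/
def freeSpan {M : Type*} [MetricSpace M] {F : Type*} [NormedAddCommGroup F]
    [NormedSpace ℝ F] (δ : M → F) (S : Set M) : Submodule ℝ F :=
  (Submodule.span ℝ (δ '' S)).topologicalClosure

theorem mem_freeSpan {M : Type*} [MetricSpace M] {F : Type*} [NormedAddCommGroup F]
    [NormedSpace ℝ F] (δ : M → F) {S : Set M} {x : M} (hx : x ∈ S) :
    δ x ∈ freeSpan δ S :=
  (Submodule.span ℝ (δ '' S)).le_topologicalClosure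
    (Submodule.subset_span ⟨x, hx, rfl⟩)



theorem WUC_comp {X Y : Type*} [SeminormedAddCommGroup X] [NormedSpace ℝ X]
    [SeminormedAddCommGroup Y] [NormedSpace ℝ Y] (T : X →L[ℝ] Y) {f : ℕ → (Y →L[ℝ] ℝ)}
    (hf : IsWUC f) : IsWUC (fun n => (f n).comp T) := by
  intro φ
  exact hf (φ.comp ((ContinuousLinearMap.compL ℝ X Y ℝ).flip T))

theorem VStar_image {X Y : Type*} [SeminormedAddCommGroup X] [NormedSpace ℝ X]
    [SeminormedAddCommGroup Y] [NormedSpace ℝ Y] (T : X →L[ℝ] Y) {W : Set X}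
    (hW : IsVStarSet W) : IsVStarSet (T '' W) := by
  intro f hf ε hε
  filter_upwards [hW _ (WUC_comp T hf) ε hε] with n hn
  rintro _ ⟨x, hx, rfl⟩
  exact hn x hx

theorem WUC_bounded {X : Type*} [SeminormedAddCommGroup X] [NormedSpace ℝ X]
    {f : ℕ → (X →L[ℝ] ℝ)} (hf : IsWUC f) : ∃ B : ℝ, 0 < B ∧ ∀ n, ‖f n‖ ≤ B := by
  have h1 : ∀ φ : (X →L[ℝ] ℝ) →L[ℝ] ℝ, ∃ C, ∀ n,
      ‖(NormedSpace.inclusionInDoubleDual ℝ (X →L[ℝ] ℝ) (f n)) φ‖ ≤ C := by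
    intro φ
    refine ⟨∑' n, |φ (f n)|, fun n => ?_⟩
    rw [NormedSpace.dual_def, Real.norm_eq_abs]
    exact (hf φ).le_tsum n (fun _ _ => abs_nonneg _)
  obtain ⟨C, hC⟩ := banach_steinhaus h1
  have hC0 : 0 ≤ C := (norm_nonneg _).trans (hC 0)
  refine ⟨C + 1, by linarith, fun n => ?_⟩
  have h2 : ‖f n‖ ≤ C := by
    refine NormedSpace.norm_le_dual_bound ℝ (f n) hC0 ?_
    intro φ
    have := (NormedSpace.inclusionInDoubleDual ℝ (X →L[ℝ] ℝ) (f n)).le_of_opNorm_le (hC n) φ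
    rwa [NormedSpace.dual_def] at this
  linarith

theorem VStar_approx {X : Type*} [SeminormedAddCommGroup X] [NormedSpace ℝ X]
    {ι : Type*} (W : Set ι) (T : ℕ → ι → X) (S : ι → X)
    (hT : ∀ k, IsVStarSet (T k '' W))
    (hlim : ∀ ε > (0:ℝ), ∃ k, ∀ x ∈ W, ‖S x - T k x‖ ≤ ε) :
    IsVStarSet (S '' W) := by
  intro f hf ε hε
  obtain ⟨B, hB, hfB⟩ := WUC_bounded hf
  obtain ⟨k, hk⟩ := hlim (ε / (2 * B)) (by positivity)
  filter_upwards [hT k f hf (ε / 2) (by positivity)] with n hn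
  rintro _ ⟨x, hx, rfl⟩
  have h1 := hn _ ⟨x, hx, rfl⟩
  have h2 : |f n (S x - T k x)| ≤ B * (ε / (2 * B)) := by
    rw [← Real.norm_eq_abs]
    exact ((f n).le_of_opNorm_le (hfB n) _).trans (by gcongr; exact hk x hx)
  have h3 : B * (ε / (2 * B)) = ε / 2 := by field_simp
  rw [h3, map_sub] at h2
  rw [abs_le] at *
  constructor <;> linarith

theorem tendsto_weak_iff {X : Type*} [NormedAddCommGroup X] [NormedSpace ℝ X]
    {α : Type*} {l : Filter α} (f : α → X) (x : X) :
    Tendsto (fun a => toWeakSpace ℝ X (f a)) l (𝓝 (toWeakSpace ℝ X x)) ↔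
      ∀ φ : X →L[ℝ] ℝ, Tendsto (fun a => φ (f a)) l (𝓝 (φ x)) := by
  refine WeakBilin.tendsto_iff_forall_eval_tendsto (B := (topDualPairing ℝ X).flip) ?_
  intro x y hxy
  by_contra hne
  obtain ⟨φ, hφ⟩ := SeparatingDual.exists_separating_of_ne (R := ℝ) hne
  exact hφ (by simpa using! DFunLike.congr_fun hxy φ)

theorem t2_weak {X : Type*} [NormedAddCommGroup X] [NormedSpace ℝ X] :
    T2Space (WeakSpace ℝ X) := by
  refine (WeakBilin.isEmbedding (B := (topDualPairing ℝ X).flip) ?_).t2Space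
  intro x y hxy
  by_contra hne
  obtain ⟨φ, hφ⟩ := SeparatingDual.exists_separating_of_ne (R := ℝ) hne
  exact hφ (by simpa using! DFunLike.congr_fun hxy φ)

theorem relWeak_image {X Y : Type*} [NormedAddCommGroup X] [NormedSpace ℝ X]
    [NormedAddCommGroup Y] [NormedSpace ℝ Y] (T : X →L[ℝ] Y) {W : Set X}
    (hW : RelWeaklyCompact W) : RelWeaklyCompact (T '' W) := by
  have := t2_weak (X := Y)
  have h := IsCompact.image hW (WeakSpace.map T).continuous
  refine h.of_isClosed_subset isClosed_closure (closure_minimal ?_ h.isClosed)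
  rintro _ ⟨_, ⟨x, hx, rfl⟩, rfl⟩
  exact ⟨toWeakSpace ℝ X x, subset_closure ⟨x, hx, rfl⟩, rfl⟩

open scoped Pointwise in
/-- The Grothendieck lemma on weak compactness. -/
theorem relWeak_of_approx {X : Type*} [NormedAddCommGroup X] [NormedSpace ℝ X] [CompleteSpace X]
    {W : Set X}
    (h : ∀ ε > (0:ℝ), ∃ S : Set X, RelWeaklyCompact S ∧ ∀ x ∈ W, ∃ s ∈ S, ‖x - s‖ ≤ ε) :
    RelWeaklyCompact W := by
  have := t2_weak (X := X)
  have h1 : ∀ k : ℕ, ∃ C : Set X, IsCompact (toWeakSpace ℝ X '' C) ∧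
      ∀ x, toWeakSpace ℝ X x ∈ closure (toWeakSpace ℝ X '' W) →
        ∃ s ∈ C, ‖x - s‖ ≤ 1 / (k + 1 : ℝ) := by
    intro k
    obtain ⟨S, hS, hWS⟩ := h (1 / (k + 1 : ℝ)) (by positivity)
    refine ⟨(toWeakSpace ℝ X).symm '' closure (toWeakSpace ℝ X '' S), ?_, ?_⟩
    · simpa [Set.image_image] using! hS
    · have hB : IsClosed (toWeakSpace ℝ X '' (closedBall 0 (1 / (k + 1 : ℝ)))) := by
        have := (convex_closedBall (0 : X) (1 / (k + 1 : ℝ))).toWeakSpace_closure ℝ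
        rw [isClosed_closedBall.closure_eq] at this
        rw [this]; exact isClosed_closure
      have hcl : IsClosed (closure (toWeakSpace ℝ X '' S) +
          (toWeakSpace ℝ X '' (closedBall 0 (1 / (k + 1 : ℝ))))) := hB.add_left_of_isCompact hS
      have hsub : closure (toWeakSpace ℝ X '' W) ⊆ closure (toWeakSpace ℝ X '' S) +
          (toWeakSpace ℝ X '' (closedBall 0 (1 / (k + 1 : ℝ)))) := by
        refine closure_minimal ?_ hcl
        rintro _ ⟨x, hx, rfl⟩
        obtain ⟨s, hs, hxs⟩ := hWS x hx
        refine ⟨toWeakSpace ℝ X s, subset_closure ⟨s, hs, rfl⟩, toWeakSpace ℝ X (x - s),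
          ⟨x - s, by simpa using! hxs, rfl⟩, ?_⟩
        simp
      intro x hx
      obtain ⟨s, hs, _, ⟨b, hb, rfl⟩, hsb⟩ := hsub hx
      refine ⟨(toWeakSpace ℝ X).symm s, ⟨s, hs, rfl⟩, ?_⟩
      have : x - (toWeakSpace ℝ X).symm s = b := by
        apply (toWeakSpace ℝ X).injective
        rw [map_sub, LinearEquiv.apply_symm_apply, ← hsb]
        simp
      rw [this]; simpa using! hb
  choose C hC hCs using h1
  unfold RelWeaklyCompact
  rw [isCompact_iff_ultrafilter_le_nhds]
  intro U hU
  rw [le_principal_iff] at hU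
  choose! s hsC hs using hCs
  let V : Ultrafilter X := U.map (toWeakSpace ℝ X).symm
  have hVW : ∀ᶠ x in (V : Filter X), toWeakSpace ℝ X x ∈ closure (toWeakSpace ℝ X '' W) := by
    have : ∀ᶠ x in (U : Filter _), x ∈ closure (toWeakSpace ℝ X '' W) := hU
    simpa [V] using! this
  have h2 : ∀ k, ∃ y : X, Tendsto (fun x => toWeakSpace ℝ X (s k x)) V
      (𝓝 (toWeakSpace ℝ X y)) := by
    intro k
    have hc := isCompact_iff_ultrafilter_le_nhds.1 (hC k) (V.map (fun x => toWeakSpace ℝ X (s k x)))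
      (by
        rw [le_principal_iff, Ultrafilter.coe_map, Filter.mem_map]
        filter_upwards [hVW] with x hx
        exact ⟨_, hsC k x hx, rfl⟩)
    obtain ⟨_, ⟨y, hy, rfl⟩, hy2⟩ := hc
    exact ⟨y, hy2⟩
  choose y hy using h2
  simp only [tendsto_weak_iff] at hy
  have hdist : ∀ k m, ‖y k - y m‖ ≤ 1 / (k + 1 : ℝ) + 1 / (m + 1 : ℝ) := by
    intro k m
    refine NormedSpace.norm_le_dual_bound ℝ _ (by positivity) ?_
    intro φ
    have ht := ((hy k φ).sub (hy m φ)).norm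
    rw [map_sub]
    refine le_of_tendsto ht ?_
    filter_upwards [hVW] with x hx
    rw [← map_sub]
    refine (φ.le_opNorm _).trans ?_
    rw [mul_comm]
    gcongr
    calc ‖s k x - s m x‖ = ‖(x - s m x) - (x - s k x)‖ := by congr 1; abel
      _ ≤ ‖x - s m x‖ + ‖x - s k x‖ := norm_sub_le _ _
      _ ≤ _ := by linarith [hs k x hx, hs m x hx]
  have hlim0 : Tendsto (fun k : ℕ => 1 / (k + 1 : ℝ)) atTop (𝓝 0) :=
    tendsto_one_div_add_atTop_nhds_zero_nat
  have hcau : CauchySeq y := by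
    refine cauchySeq_of_le_tendsto_0 (fun k : ℕ => 2 * (1 / (k + 1 : ℝ))) ?_ (by
      simpa using! hlim0.const_mul 2)
    intro n m N hn hm
    rw [dist_eq_norm]
    refine (hdist n m).trans ?_
    have e1 : 1 / (n + 1 : ℝ) ≤ 1 / (N + 1 : ℝ) := by gcongr
    have e2 : 1 / (m + 1 : ℝ) ≤ 1 / (N + 1 : ℝ) := by gcongr
    linarith
  obtain ⟨z, hz⟩ := cauchySeq_tendsto_of_complete hcau
  have hzw : Tendsto (fun x => toWeakSpace ℝ X x) V (𝓝 (toWeakSpace ℝ X z)) := by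
    rw [tendsto_weak_iff]
    intro φ
    rw [Metric.tendsto_nhds]
    intro ε hε
    have hk1 : ∀ᶠ k : ℕ in atTop, ‖φ‖ * (1 / (k + 1 : ℝ)) < ε / 3 := by
      have := hlim0.const_mul ‖φ‖
      rw [mul_zero] at this
      exact this.eventually_lt_const (by positivity)
    have hk2 : ∀ᶠ k : ℕ in atTop, dist (φ (y k)) (φ z) < ε / 3 :=
      (Metric.tendsto_nhds.1 ((φ.continuous.tendsto z).comp hz)) _ (by positivity)
    obtain ⟨k, hk1, hk2⟩ := (hk1.and hk2).exists
    filter_upwards [hVW, (Metric.tendsto_nhds.1 (hy k φ)) (ε / 3) (by positivity)] with x hx hx2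
    have h3 : dist (φ x) (φ (s k x)) < ε / 3 := by
      rw [dist_eq_norm, ← map_sub]
      refine lt_of_le_of_lt ((φ.le_opNorm _).trans ?_) hk1
      gcongr
      exact hs k x hx
    calc dist (φ x) (φ z) ≤ dist (φ x) (φ (s k x)) + dist (φ (s k x)) (φ (y k))
        + dist (φ (y k)) (φ z) := dist_triangle4 _ _ _ _
      _ < ε := by linarith
  have hUz : (U : Filter _) ≤ 𝓝 (toWeakSpace ℝ X z) := by
    simpa [V, Tendsto, Filter.map_map, Function.comp_def] using! hzw
  exact ⟨toWeakSpace ℝ X z, isClosed_closure.mem_of_tendsto (f := id) hUz hU, hUz⟩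

section free

variable {M : Type*} [MetricSpace M] {o : M}
    {F : Type*} [NormedAddCommGroup F] [NormedSpace ℝ F] {δ : M → F}

theorem free_ext (hδ : IsLipschitzFree o δ) {Y : Type*} [NormedAddCommGroup Y] [NormedSpace ℝ Y]
    {φ ψ : F →L[ℝ] Y} (h : ∀ x, φ (δ x) = ψ (δ x)) : φ = ψ := by
  refine ContinuousLinearMap.ext_on hδ.dense_span ?_
  rintro _ ⟨x, rfl⟩
  exact h x

/-- Linear extension of Lipschitz vector-valued maps. -/
theorem free_lift_vec (hδ : IsLipschitzFree o δ) {Y : Type*} [NormedAddCommGroup Y]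
    [NormedSpace ℝ Y] [CompleteSpace Y] (C : NNReal) (v : M → Y) (hv : LipschitzWith C v)
    (hvo : v o = 0) : ∃ T : F →L[ℝ] Y, ∀ x, T (δ x) = v x := by
  let A := Finsupp.linearCombination ℝ δ
  let B := Finsupp.linearCombination ℝ v
  have hdense : DenseRange A := by
    have := hδ.dense_span
    rw [← Finsupp.range_linearCombination] at this
    exact this
  have hnorm : ∀ a, ‖B a‖ ≤ C * ‖A a‖ := by
    intro a
    refine NormedSpace.norm_le_dual_bound ℝ _ (by positivity) ?_
    intro φ
    obtain ⟨ψ, hψ, hψx⟩ := hδ.lift (‖φ‖₊ * C) (fun x => φ (v x)) (φ.lipschitz.comp hv)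
      (by simp [hvo])
    have : φ (B a) = ψ (A a) := by
      simp only [A, B, Finsupp.linearCombination_apply, Finsupp.sum, map_sum, map_smul, hψx]
    rw [this]
    calc ‖ψ (A a)‖ ≤ ‖ψ‖ * ‖A a‖ := ψ.le_opNorm _
      _ ≤ (‖φ‖ * C) * ‖A a‖ := by gcongr; simpa using hψ
      _ = _ := by ring
  refine ⟨B.extendOfNorm A, fun x => ?_⟩
  have := LinearMap.extendOfNorm_eq hdense ⟨C, hnorm⟩ (Finsupp.single x 1)
  simpa [A, B] using this

/-- Disjointly supported uniformly Lipschitz functions form a WUC series. -/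
theorem WUC_of_disjoint (hδ : IsLipschitzFree o δ) (C : NNReal) (ψ : ℕ → (F →L[ℝ] ℝ))
    (hlip : ∀ n, LipschitzWith C (fun x => ψ n (δ x)))
    (hdisj : ∀ x n m, ψ n (δ x) ≠ 0 → ψ m (δ x) ≠ 0 → n = m) : IsWUC ψ := by
  intro Φ
  have key : ∀ (A : Finset ℕ) (σ : ℕ → ℝ), (∀ n, |σ n| ≤ 1) →
      ‖∑ n ∈ A, σ n • ψ n‖ ≤ 2 * C := by
    intro A σ hσ
    have hone : ∀ x : M, ∃ m : ℕ, ∀ n, n ≠ m → ψ n (δ x) = 0 := by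
      intro x
      by_cases h : ∃ m, ψ m (δ x) ≠ 0
      · obtain ⟨m, hm⟩ := h
        refine ⟨m, fun n hn => ?_⟩
        by_contra h0
        exact hn (hdisj x n m h0 hm)
      · push Not at h
        exact ⟨0, fun n _ => h n⟩
    have hbd : ∀ (n : ℕ) (x y : M), |σ n * (ψ n (δ x) - ψ n (δ y))| ≤ C * dist x y := by
      intro n x y
      rw [abs_mul]
      have := (hlip n).dist_le_mul x y
      rw [Real.dist_eq] at this
      calc _ ≤ 1 * |ψ n (δ x) - ψ n (δ y)| := by gcongr; exact hσ n
        _ ≤ _ := by rw [one_mul]; exact this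
    have hL : LipschitzWith (2 * C) (fun x => (∑ n ∈ A, σ n • ψ n) (δ x)) := by
      refine LipschitzWith.of_dist_le_mul fun x y => ?_
      rw [Real.dist_eq]
      obtain ⟨m, hm⟩ := hone x
      obtain ⟨k, hk⟩ := hone y
      have e : (∑ n ∈ A, σ n • ψ n) (δ x) - (∑ n ∈ A, σ n • ψ n) (δ y)
          = ∑ n ∈ A, σ n * (ψ n (δ x) - ψ n (δ y)) := by
        simp [← Finset.sum_sub_distrib, mul_sub]
      rw [e]
      have hle : ∑ n ∈ A, |σ n * (ψ n (δ x) - ψ n (δ y))|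
          ≤ ∑ n ∈ ({m, k} : Finset ℕ), |σ n * (ψ n (δ x) - ψ n (δ y))| := by
        rw [← Finset.sum_filter_of_ne (p := fun n => n ∈ ({m, k} : Finset ℕ))]
        · refine Finset.sum_le_sum_of_subset_of_nonneg ?_ (fun _ _ _ => abs_nonneg _)
          intro n hn
          exact (Finset.mem_filter.1 hn).2
        intro n _ hn
        by_contra hcon
        simp only [Finset.mem_insert, Finset.mem_singleton, not_or] at hcon
        apply hn
        rw [hm n hcon.1, hk n hcon.2]; simp
      refine (Finset.abs_sum_le_sum_abs _ _).trans (hle.trans ?_)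
      calc _ ≤ ∑ n ∈ ({m, k} : Finset ℕ), (C : ℝ) * dist x y :=
            Finset.sum_le_sum fun n _ => hbd n x y
        _ = (({m, k} : Finset ℕ).card : ℝ) * (C * dist x y) := by simp
        _ ≤ 2 * (C * dist x y) := by
            gcongr
            exact_mod_cast Finset.card_le_two
        _ = _ := by push_cast; ring
    obtain ⟨χ, hχ, hχx⟩ := hδ.lift _ _ hL (by simp [hδ.map_base])
    have : χ = ∑ n ∈ A, σ n • ψ n := free_ext hδ hχx
    rw [← this]
    simpa using hχ
  refine summable_of_sum_le (c := ‖Φ‖ * (2 * C)) (fun _ => abs_nonneg _) ?_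
  intro A
  have h1 : ∑ n ∈ A, |Φ (ψ n)| = Φ (∑ n ∈ A, (SignType.sign (Φ (ψ n)) : ℝ) • ψ n) := by
    simp only [map_sum, map_smul, smul_eq_mul, sign_mul_self]
  rw [h1]
  refine (le_abs_self _).trans ?_
  rw [← Real.norm_eq_abs]
  refine (Φ.le_opNorm _).trans ?_
  gcongr
  apply key
  intro n
  rcases SignType.sign (Φ (ψ n)) with _ | _ | _ <;> simp

theorem bump_exists (C : NNReal) (hC : 1 ≤ C) (g : M → ℝ) (hg : LipschitzWith 1 g)
    (hg0 : ∀ x, 0 ≤ g x) (S : Finset M) : ∃ g' : M → ℝ, LipschitzWith C g' ∧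
      (∀ x, 0 ≤ g' x) ∧ (∀ x, g' x ≤ g x) ∧ (∀ s ∈ S, g' s = g s) ∧
      ∀ x, g' x ≠ 0 → ∃ s ∈ S, C * dist x s < g s := by
  classical
  induction S using Finset.induction_on with
  | empty =>
    exact ⟨fun _ => 0, (LipschitzWith.const 0).weaken zero_le, fun _ => le_rfl, hg0, by simp, by simp⟩
  | insert a S ha ih =>
    obtain ⟨g', h1, h2, h3, h4, h5⟩ := ih
    have hle : ∀ x, g a - C * dist x a ≤ g x := by
      intro x
      have := hg.dist_le_mul x a
      rw [Real.dist_eq, abs_le] at this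
      have hC' : (1 : ℝ) ≤ C := by exact_mod_cast hC
      have : dist x a ≤ C * dist x a := le_mul_of_one_le_left dist_nonneg hC'
      push_cast at *
      linarith
    refine ⟨fun x => max (g' x) (g a - C * dist x a), ?_, ?_, ?_, ?_, ?_⟩
    · have : LipschitzWith C (fun x => g a - C * dist x a) := by
        refine LipschitzWith.of_le_add_mul C fun x y => ?_
        have : C * dist y a ≤ C * (dist x y + dist x a) := by
          gcongr
          rw [dist_comm x y]; exact dist_triangle _ _ _
        linarith
      simpa using h1.max this
    · intro x; exact le_max_of_le_left (h2 x)
    · intro x; exact max_le (h3 x) (hle x)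
    · intro s hs
      rcases Finset.mem_insert.1 hs with rfl | hs
      · simp [h3]
      · simp only [h4 s hs]
        exact max_eq_left (hle s)
    · intro x hx
      by_cases h0 : g' x = 0
      · refine ⟨a, Finset.mem_insert_self _ _, ?_⟩
        by_contra hcon
        apply hx
        simp only [h0]
        exact max_eq_left (by linarith)
      · obtain ⟨s, hs, h⟩ := h5 x h0
        exact ⟨s, Finset.mem_insert_of_mem hs, h⟩

end free

section free2

variable {M : Type*} [MetricSpace M] {o : M}
    {F : Type*} [NormedAddCommGroup F] [NormedSpace ℝ F] {δ : M → F}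

theorem free_finsupp (hδ : IsLipschitzFree o δ) (μ : F) {ε : ℝ} (hε : 0 < ε) :
    ∃ a : M →₀ ℝ, ‖μ - Finsupp.linearCombination ℝ δ a‖ < ε := by
  have h := hδ.dense_span
  rw [← Finsupp.range_linearCombination] at h
  obtain ⟨_, ⟨a, rfl⟩, ha⟩ := h.exists_dist_lt μ hε
  exact ⟨a, by rwa [dist_eq_norm] at ha⟩

theorem free_norm (hδ : IsLipschitzFree o δ) (x : M) : ‖δ x‖ = dist x o := by
  rw [← hδ.isometry.dist_eq, hδ.map_base, dist_zero_right]

theorem free_norm_le (hδ : IsLipschitzFree o δ) (C : NNReal) (φ : F →L[ℝ] ℝ)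
    (h : LipschitzWith C (fun x => φ (δ x))) : ‖φ‖ ≤ C := by
  obtain ⟨χ, hχ, hχx⟩ := hδ.lift _ _ h (by simp [hδ.map_base])
  rwa [free_ext hδ hχx] at hχ

/-- The Kalton lemma for (V*)-sets: one step of the gliding hump. -/
theorem kalton_step (hδ : IsLipschitzFree o δ) (W : Set F) {η : ℝ} (hη : 0 < η)
    (C : NNReal) (hC : 1 ≤ C) (r : ℝ) (E : Finset M) (φ : F →L[ℝ] ℝ)
    (hφ : LipschitzWith 1 (fun x => φ (δ x)))
    (hv : ∀ x, (∃ e ∈ E, dist x e ≤ r * dist x o) → φ (δ x) = 0)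
    (μ : F) (hμ : μ ∈ W) (hφμ : η < |φ μ|) :
    ∃ (E' : Finset M) (ψ : F →L[ℝ] ℝ) (ν : F), E ⊆ E' ∧ ν ∈ W ∧
      LipschitzWith C (fun x => ψ (δ x)) ∧ η / 4 < |ψ ν| ∧
      ∀ x, ψ (δ x) ≠ 0 → ∃ s ∈ E', C * dist x s < dist s o ∧ ∀ e ∈ E, r * dist s o < dist s e := by
  classical
  have hpos : ∃ χ : F →L[ℝ] ℝ, LipschitzWith 1 (fun x => χ (δ x)) ∧ (∀ x, 0 ≤ χ (δ x)) ∧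
      (∀ x, (∃ e ∈ E, dist x e ≤ r * dist x o) → χ (δ x) = 0) ∧ η / 2 < |χ μ| := by
    have hp : LipschitzWith 1 (fun x => max (φ (δ x)) 0) := hφ.max_const 0
    have hn : LipschitzWith 1 (fun x => max (-φ (δ x)) 0) := hφ.neg.max_const 0
    obtain ⟨p, hp1, hpx⟩ := hδ.lift _ _ hp (by simp [hδ.map_base])
    obtain ⟨n, hn1, hnx⟩ := hδ.lift _ _ hn (by simp [hδ.map_base])
    have he : φ = p - n := by
      apply free_ext hδ
      intro x
      rw [_root_.sub_apply, hpx, hnx]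
      rcases le_total (φ (δ x)) 0 with h | h
      · rw [max_eq_right h, max_eq_left (by linarith)]; ring
      · rw [max_eq_left h, max_eq_right (by linarith)]; ring
    have : η / 2 < |p μ| ∨ η / 2 < |n μ| := by
      by_contra hcon
      push Not at hcon
      rw [he, _root_.sub_apply] at hφμ
      have := abs_sub (p μ) (n μ)
      linarith [hcon.1, hcon.2]
    rcases this with h | h
    · refine ⟨p, by simpa only [hpx] using hp, fun x => by rw [hpx]; exact le_max_right _ _, ?_, h⟩
      intro x hx
      rw [hpx, hv x hx]; simp
    · refine ⟨n, by simpa only [hnx] using hn, fun x => by rw [hnx]; exact le_max_right _ _, ?_, h⟩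
      intro x hx
      rw [hnx, hv x hx]; simp
  obtain ⟨χ, hχ, hχ0, hχv, hχμ⟩ := hpos
  have hCr : (1 : ℝ) ≤ C := by exact_mod_cast hC
  obtain ⟨a, ha⟩ := free_finsupp hδ μ (ε := η / (8 * C)) (by positivity)
  obtain ⟨g', h1, h2, h3, h4, h5⟩ := bump_exists C hC _ hχ hχ0 a.support
  have hg'o : g' o = 0 := by
    have e := h3 o
    simp only [hδ.map_base, map_zero] at e
    exact le_antisymm e (h2 o)
  obtain ⟨ψ, hψ, hψx⟩ := hδ.lift _ _ h1 hg'o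
  refine ⟨E ∪ a.support, ψ, μ, Finset.subset_union_left, hμ, by simpa only [hψx] using h1, ?_, ?_⟩
  · set ν := Finsupp.linearCombination ℝ δ a with hν
    have heq : ψ ν = χ ν := by
      simp only [hν, Finsupp.linearCombination_apply, Finsupp.sum, map_sum, map_smul, hψx]
      refine Finset.sum_congr rfl fun s hs => ?_
      rw [h4 s hs]
    have e1 : |χ (μ - ν)| ≤ 1 * ‖μ - ν‖ := χ.le_of_opNorm_le (free_norm_le hδ 1 χ hχ) _
    have e2 : |ψ (μ - ν)| ≤ C * ‖μ - ν‖ := ψ.le_of_opNorm_le hψ _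
    have e3 : (C : ℝ) * ‖μ - ν‖ ≤ η / 8 := by
      calc (C : ℝ) * ‖μ - ν‖ ≤ C * (η / (8 * C)) := by gcongr
        _ = η / 8 := by field_simp
    have e4 : 1 * ‖μ - ν‖ ≤ C * ‖μ - ν‖ := by gcongr
    rw [map_sub] at e1 e2
    have e5 : |χ μ| ≤ |ψ μ| + |χ μ - χ ν| + |ψ μ - ψ ν| := by
      have : χ μ = ψ μ + (χ μ - χ ν) - (ψ μ - ψ ν) := by rw [heq]; ring
      calc |χ μ| = |ψ μ + (χ μ - χ ν) - (ψ μ - ψ ν)| := by rw [← this]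
        _ ≤ |ψ μ + (χ μ - χ ν)| + |ψ μ - ψ ν| := abs_sub _ _
        _ ≤ _ := by gcongr; exact abs_add_le _ _
    linarith
  · intro x hx
    rw [hψx] at hx
    obtain ⟨s, hs, hsx⟩ := h5 x hx
    refine ⟨s, Finset.mem_union_right _ hs, ?_, ?_⟩
    · refine hsx.trans_le ?_
      have := hχ.dist_le_mul s o
      simp only [hδ.map_base, map_zero, dist_zero_right, Real.norm_eq_abs] at this
      have h' := le_abs_self (χ (δ s))
      simp at this
      linarith
    · intro e he
      by_contra hcon
      push Not at hcon
      have := hχv s ⟨e, he, hcon⟩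
      have h0 : (0:ℝ) ≤ C * dist x s := by positivity
      linarith

theorem kalton (hδ : IsLipschitzFree o δ) {W : Set F} (hW : IsVStarSet W) {η : ℝ} (hη : 0 < η)
    {r : ℝ} (hr : 0 < r) (hr1 : r ≤ 1) :
    ∃ E : Finset M, o ∈ E ∧ ∀ φ : F →L[ℝ] ℝ, LipschitzWith 1 (fun x => φ (δ x)) →
      (∀ x, (∃ e ∈ E, dist x e ≤ r * dist x o) → φ (δ x) = 0) → ∀ μ ∈ W, |φ μ| ≤ η := by
  by_contra hcon
  push Not at hcon
  let C : NNReal := ⟨3 / r, by positivity⟩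
  have hCr : (C : ℝ) = 3 / r := rfl
  have hC : 1 ≤ C := by
    rw [← NNReal.coe_le_coe, hCr, NNReal.coe_one, le_div_iff₀ hr]; linarith
  have step : ∀ E : {E : Finset M // o ∈ E},
      ∃ (E' : {E : Finset M // o ∈ E}) (ψ : F →L[ℝ] ℝ) (ν : F), E.1 ⊆ E'.1 ∧ ν ∈ W ∧
      LipschitzWith C (fun x => ψ (δ x)) ∧ η / 4 < |ψ ν| ∧
      ∀ x, ψ (δ x) ≠ 0 → ∃ s ∈ E'.1, C * dist x s < dist s o ∧
        ∀ e ∈ E.1, r * dist s o < dist s e := by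
    rintro ⟨E, hE⟩
    obtain ⟨φ, hφ, hv, μ, hμ, hφμ⟩ := hcon E hE
    obtain ⟨E', ψ, ν, h1, h2⟩ := kalton_step hδ W hη C hC r E φ hφ hv μ hμ hφμ
    exact ⟨⟨E', h1 hE⟩, ψ, ν, h1, h2⟩
  choose nxt ψ ν hsub hνW hlip hbig hsupp using step
  let E : ℕ → {E : Finset M // o ∈ E} := fun n => nxt^[n] ⟨{o}, by simp⟩
  have hE : ∀ n, E (n + 1) = nxt (E n) := fun n => Function.iterate_succ_apply' _ _ _
  have hmono : Monotone (fun n => (E n).1) := by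
    refine monotone_nat_of_le_succ fun n => ?_
    simp only [hE]
    exact hsub _
  have hlt : ∀ x m n, m < n → ψ (E n) (δ x) ≠ 0 → ψ (E m) (δ x) ≠ 0 → False := by
    intro x m n hmn hn hm
    obtain ⟨s, hs, hs1, hs2⟩ := hsupp _ x hn
    obtain ⟨t, ht, ht1, ht2⟩ := hsupp _ x hm
    rw [← hE] at ht
    have htE : t ∈ (E n).1 := hmono (Nat.succ_le_of_lt hmn) ht
    have h3 := hs2 t htE
    rw [hCr, div_mul_eq_mul_div, div_lt_iff₀ hr] at hs1 ht1
    have i1 := dist_triangle t x o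
    have i2 := dist_triangle x s o
    have i3 := dist_triangle s x t
    rw [dist_comm t x] at i1
    rw [dist_comm s x] at i3
    have j1 : dist t o * r ≤ dist t o * 1 := by gcongr
    have j2 : dist s o * r ≤ dist s o * 1 := by gcongr
    have j3 : dist t o ≤ 2 * dist s o := by linarith
    have j4 : dist t o * r ≤ 2 * dist s o * r := by gcongr
    linarith
  have hwuc : IsWUC (fun n => ψ (E n)) := by
    refine WUC_of_disjoint hδ C _ (fun n => hlip _) ?_
    intro x n m hn hm
    rcases lt_trichotomy n m with h | h | h
    · exact (hlt x n m h hm hn).elim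
    · exact h
    · exact (hlt x m n h hn hm).elim
  obtain ⟨n, hn⟩ := (hW _ hwuc (η / 4) (by positivity)).exists
  exact absurd (hn _ (hνW (E n))) (not_le.2 (hbig (E n)))

/-- The cutoff function. -/
theorem cutoff_exists (hδ : IsLipschitzFree o δ) (E : Finset M) (hE : o ∈ E) {r : ℝ}
    (hr : 0 < r) : ∃ h : M → ℝ, (∀ x, (∃ e ∈ E, dist x e ≤ r * dist x o) → h x = 1) ∧
      (∀ x, h x ≠ 0 → ∃ e ∈ E, dist x e ≤ 2 * r * dist x o) ∧
      ∀ x y, ‖h x • δ x - h y • δ y‖ ≤ (1 + 2 / r) * dist x y := by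
  have hne : (E : Set M).Nonempty := ⟨o, hE⟩
  let q : M → ℝ := fun x => infDist x E / (r * dist x o)
  let h : M → ℝ := fun x => max 0 (min 1 (2 - q x))
  have hh0 : ∀ x, 0 ≤ h x := fun x => le_max_left _ _
  have hh1 : ∀ x, h x ≤ 1 := fun x => max_le zero_le_one (min_le_left _ _)
  have hho : h o = 1 := by simp [h, q]
  have hhq : ∀ x y, |h x - h y| ≤ |q x - q y| := by
    intro x y
    refine (abs_max_sub_max_le_max _ _ _ _).trans ?_
    simp only [sub_self, abs_zero]
    refine max_le (abs_nonneg _) ?_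
    refine (abs_min_sub_min_le_max _ _ _ _).trans ?_
    simp only [sub_self, abs_zero]
    refine max_le (abs_nonneg _) ?_
    rw [abs_sub_comm (q x)]
    apply le_of_eq; congr 1; ring
  refine ⟨h, ?_, ?_, ?_⟩
  · rintro x ⟨e, he, hxe⟩
    rcases eq_or_ne x o with rfl | hx
    · exact hho
    have hd : 0 < dist x o := dist_pos.2 hx
    have h1 : infDist x E ≤ r * dist x o := (infDist_le_dist_of_mem (by exact_mod_cast he)).trans hxe
    have h2 : q x ≤ 1 := (div_le_one (by positivity)).2 h1
    simp only [h]
    rw [min_eq_left (by linarith)]; simp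
  · intro x hx
    rcases eq_or_ne x o with rfl | hxo
    · exact ⟨x, hE, by simp⟩
    have hd : 0 < dist x o := dist_pos.2 hxo
    have h2 : q x < 2 := by
      by_contra hcon
      push Not at hcon
      apply hx
      simp only [h]
      exact max_eq_left ((min_le_right _ _).trans (by linarith))
    have h3 : infDist x E < 2 * (r * dist x o) := (div_lt_iff₀ (by positivity)).1 h2
    obtain ⟨e, he, hxe⟩ := (infDist_lt_iff hne).1 h3
    exact ⟨e, by exact_mod_cast he, by linarith⟩
  · intro x y
    have hsplit : h x • δ x - h y • δ y = h x • (δ x - δ y) + (h x - h y) • δ y := by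
      rw [smul_sub, sub_smul]; abel
    have h1 : ‖h x • (δ x - δ y)‖ ≤ dist x y := by
      rw [norm_smul, ← dist_eq_norm, hδ.isometry.dist_eq, Real.norm_eq_abs, abs_of_nonneg (hh0 x)]
      exact mul_le_of_le_one_left dist_nonneg (hh1 x)
    by_cases hxo : x = o
    · subst hxo
      rw [hδ.map_base, smul_zero, zero_sub, norm_neg, norm_smul, free_norm hδ, Real.norm_eq_abs,
        abs_of_nonneg (hh0 y), dist_comm y x]
      have : 0 ≤ 2 / r := by positivity
      gcongr
      linarith [hh1 y]
    have h2 : ‖(h x - h y) • δ y‖ ≤ 2 / r * dist x y := by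
      rw [norm_smul, free_norm hδ, Real.norm_eq_abs]
      by_cases hyo : y = o
      · subst hyo; simp; positivity
      have ha : 0 < dist x o := dist_pos.2 hxo
      have hb : 0 < dist y o := dist_pos.2 hyo
      have hdx : infDist x E ≤ dist x o := infDist_le_dist_of_mem (by exact_mod_cast hE)
      have hdx0 : 0 ≤ infDist x E := infDist_nonneg
      have e1 : (q x - q y) * dist y o =
          (infDist x E / dist x o * (dist y o - dist x o) + (infDist x E - infDist y E)) / r := by
        simp only [q]; field_simp; ring
      have e2 : |dist y o - dist x o| ≤ dist x y := by
        rw [dist_comm x y]; exact abs_dist_sub_le y x o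
      have e3 : |infDist x E - infDist y E| ≤ dist x y := by
        have := (lipschitz_infDist_pt (E : Set M)).dist_le_mul x y
        simpa [Real.dist_eq] using this
      have e4 : |infDist x E / dist x o * (dist y o - dist x o)| ≤ 1 * dist x y := by
        rw [abs_mul, abs_of_nonneg (by positivity)]
        gcongr
        exact (div_le_one ha).2 hdx
      calc |h x - h y| * dist y o ≤ |q x - q y| * dist y o :=
            mul_le_mul_of_nonneg_right (hhq x y) hb.le
        _ = |(q x - q y) * dist y o| := by rw [abs_mul, abs_of_pos hb]
        _ = |infDist x E / dist x o * (dist y o - dist x o) + (infDist x E - infDist y E)| / r := by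
            rw [e1, abs_div, abs_of_pos hr]
        _ ≤ (1 * dist x y + dist x y) / r := by
            gcongr
            exact (abs_add_le _ _).trans (by gcongr)
        _ = _ := by ring
    rw [hsplit]
    refine (norm_add_le _ _).trans ?_
    linarith

theorem tight_step [CompleteSpace F] (hδ : IsLipschitzFree o δ) {W : Set F} (hW : IsVStarSet W)
    {r : ℝ} (hr : 0 < r) (hr1 : r ≤ 1) {ε : ℝ} (hε : 0 < ε) :
    ∃ (E : Finset M) (h : M → ℝ) (T : F →L[ℝ] F), (∀ x, T (δ x) = h x • δ x) ∧
      (∀ x, h x ≠ 0 → ∃ e ∈ E, dist x e ≤ 2 * r * dist x o) ∧ ∀ μ ∈ W, ‖μ - T μ‖ ≤ ε := by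
  have hD : (0:ℝ) < 2 + 2 / r := by positivity
  obtain ⟨E, hoE, hE⟩ := kalton hδ hW (η := ε / (2 + 2 / r)) (by positivity) hr hr1
  obtain ⟨h, hh1, hh2, hh3⟩ := cutoff_exists hδ E hoE hr
  obtain ⟨T, hT⟩ := free_lift_vec hδ ⟨1 + 2 / r, by positivity⟩ (fun x => h x • δ x)
    (LipschitzWith.of_dist_le_mul fun x y => by rw [dist_eq_norm]; exact hh3 x y)
    (by simp [hδ.map_base])
  refine ⟨E, h, T, hT, hh2, ?_⟩
  intro μ hμ
  obtain ⟨φ, hφ, hφv⟩ := exists_dual_vector'' ℝ (μ - T μ)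
  let φ' : F →L[ℝ] ℝ := (2 + 2 / r)⁻¹ • (φ.comp (ContinuousLinearMap.id ℝ F - T))
  have hφ'x : ∀ x, φ' x = (2 + 2 / r)⁻¹ * φ (x - T x) := fun x => rfl
  have key := hE φ' ?_ ?_ μ hμ
  · rw [hφ'x, hφv, abs_of_nonneg (by positivity), inv_mul_eq_div] at key
    have := (div_le_div_iff_of_pos_right hD).1 key
    simpa using this
  · refine LipschitzWith.of_dist_le_mul fun x y => ?_
    rw [dist_eq_norm, hφ'x, hφ'x, ← mul_sub, ← map_sub, norm_mul, hT, hT]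
    have e1 : ‖φ (δ x - h x • δ x - (δ y - h y • δ y))‖ ≤ (2 + 2 / r) * dist x y := by
      refine (φ.le_of_opNorm_le hφ _).trans ?_
      rw [one_mul]
      have : δ x - h x • δ x - (δ y - h y • δ y) = (δ x - δ y) - (h x • δ x - h y • δ y) := by abel
      rw [this]
      refine (norm_sub_le _ _).trans ?_
      rw [← dist_eq_norm, hδ.isometry.dist_eq]
      linarith [hh3 x y]
    rw [norm_inv, Real.norm_eq_abs, abs_of_pos hD, inv_mul_le_iff₀ hD]
    simpa using e1
  · intro x hx
    rw [hφ'x, hT, hh1 x hx]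
    simp

end free2

section free3

variable {M : Type*} [MetricSpace M] {o : M}
    {F : Type*} [NormedAddCommGroup F] [NormedSpace ℝ F] {δ : M → F}

theorem seq_lemma [CompleteSpace M] (o : M) (E : ℕ → Finset M) (x : ℕ → M)
    (hx : ∀ k, ∀ j < k, ∃ e ∈ E j, dist (x k) e ≤ 2 * (1 / (4 * (j + 1 : ℝ))) * dist (x k) o) :
    ∃ a, (∀ j : ℕ, ∃ e ∈ E j, dist a e ≤ 2 * (1 / (4 * (j + 1 : ℝ))) * dist a o) ∧
      ∃ φ : ℕ → ℕ, StrictMono φ ∧ Tendsto (x ∘ φ) atTop (𝓝 a) := by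
  classical
  have hR : ∃ R : ℝ, 0 < R ∧ ∀ k, 0 < k → dist (x k) o ≤ R := by
    refine ⟨2 * (∑ e ∈ E 0, dist e o) + 1, by positivity, fun k hk => ?_⟩
    obtain ⟨e, he, h⟩ := hx k 0 hk
    have h1 : dist e o ≤ ∑ e ∈ E 0, dist e o :=
      Finset.single_le_sum (f := fun e => dist e o) (fun _ _ => dist_nonneg) he
    have h2 := dist_triangle (x k) e o
    norm_num at h
    linarith
  obtain ⟨R, hR0, hR⟩ := hR
  have htb : TotallyBounded (range x) := by
    rw [Metric.totallyBounded_iff]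
    intro ρ hρ
    obtain ⟨j, hj⟩ := exists_nat_gt (R / ρ)
    have hj' : 2 * (1 / (4 * (j + 1 : ℝ))) * R < ρ := by
      have hlt : R < j * ρ := (div_lt_iff₀ hρ).1 hj
      have : 2 * (1 / (4 * (j + 1 : ℝ))) * R = R / (2 * (j + 1)) := by field_simp; norm_num
      rw [this, div_lt_iff₀ (by positivity)]
      have : (0:ℝ) ≤ j * ρ := by positivity
      linarith
    refine ⟨((E j ∪ (Finset.range (j + 1)).image x : Finset M) : Set M), Finset.finite_toSet _, ?_⟩
    rintro _ ⟨k, rfl⟩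
    simp only [mem_iUnion, mem_ball]
    by_cases hk : j < k
    · obtain ⟨e, he, h⟩ := hx k j hk
      refine ⟨e, by simp [he], lt_of_le_of_lt h (lt_of_le_of_lt ?_ hj')⟩
      gcongr
      exact hR k (by omega)
    · refine ⟨x k, ?_, by simpa using hρ⟩
      have : k < j + 1 := by omega
      simp only [Finset.coe_union, Finset.coe_image, mem_union]
      right
      exact ⟨k, by simpa using this, rfl⟩
  have hc : IsCompact (closure (range x)) :=
    htb.closure.isCompact_of_isClosed isClosed_closure
  obtain ⟨a, _, φ, hφ, ha⟩ := hc.tendsto_subseq (x := x) (fun n => subset_closure ⟨n, rfl⟩)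
  refine ⟨a, fun j => ?_, φ, hφ, ha⟩
  have hcl : IsClosed (⋃ e ∈ E j, {y : M | dist y e ≤ 2 * (1 / (4 * (j + 1 : ℝ))) * dist y o}) := by
    refine isClosed_biUnion_finset fun e _ => ?_
    exact isClosed_le (by fun_prop) (by fun_prop)
  have hmem := hcl.mem_of_tendsto ha (by
    filter_upwards [eventually_gt_atTop j] with n hn
    simp only [mem_iUnion, mem_ofPred_eq, exists_prop, Function.comp]
    exact hx _ j (hn.trans_le (hφ.id_le n)))
  simpa only [mem_iUnion, mem_ofPred_eq, exists_prop] using hmem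

theorem mem_of_dual (p : Submodule ℝ F) (hp : IsClosed (p : Set F)) (v : F)
    (h : ∀ φ : F →L[ℝ] ℝ, (∀ x ∈ p, φ x = 0) → φ v = 0) : v ∈ p := by
  by_contra hv
  obtain ⟨f, u, hf, hu⟩ := geometric_hahn_banach_closed_point p.convex hp hv
  have hu0 : 0 < u := by simpa using hf 0 p.zero_mem
  have := h f (fun x hx => by
    by_contra hne
    have := hf _ (p.smul_mem (u / f x) hx)
    rw [map_smul, smul_eq_mul, div_mul_cancel₀ _ hne] at this
    exact lt_irrefl _ this)
  linarith

theorem tight [CompleteSpace M] [CompleteSpace F] (hδ : IsLipschitzFree o δ) {W : Set F}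
    (hW : IsVStarSet W) {ε : ℝ} (hε : 0 < ε) :
    ∃ (K : Set M) (S : F → F), IsCompact K ∧ (∀ μ ∈ W, ‖μ - S μ‖ ≤ ε) ∧
      IsVStarSet (S '' W) ∧ ∀ μ ∈ W, S μ ∈ freeSpan δ (K ∪ {o}) := by
  have step : ∀ (n : ℕ) (T : F →L[ℝ] F), ∃ (E : Finset M) (h : M → ℝ) (T' : F →L[ℝ] F),
      (∀ x, T' (δ x) = h x • δ x) ∧
      (∀ x, h x ≠ 0 → ∃ e ∈ E, dist x e ≤ 2 * (1 / (4 * (n + 1 : ℝ))) * dist x o) ∧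
      ∀ μ ∈ W, ‖T μ - T' (T μ)‖ ≤ ε / 2 / 2 ^ n := by
    intro n T
    have h1 : 1 / (4 * (n + 1 : ℝ)) ≤ 1 := by
      rw [div_le_one (by positivity)]
      have : (0:ℝ) ≤ n := by positivity
      linarith
    obtain ⟨E, h, T', a1, a2, a3⟩ := tight_step hδ (VStar_image T hW)
      (r := 1 / (4 * (n + 1 : ℝ))) (by positivity) h1 (ε := ε / 2 / 2 ^ n) (by positivity)
    exact ⟨E, h, T', a1, a2, fun μ hμ => a3 _ ⟨μ, hμ, rfl⟩⟩
  choose Es hs Ts hTs hsupp hclose using step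
  let U : ℕ → (F →L[ℝ] F) := fun n =>
    Nat.rec (ContinuousLinearMap.id ℝ F) (fun n T => (Ts n T).comp T) n
  have hU0 : ∀ μ, U 0 μ = μ := fun μ => rfl
  have hUs : ∀ n μ, U (n + 1) μ = Ts n (U n) (U n μ) := fun n μ => rfl
  let h : ℕ → M → ℝ := fun n => hs n (U n)
  let E : ℕ → Finset M := fun n => Es n (U n)
  have hUδ : ∀ n x, U n (δ x) = (∏ j ∈ Finset.range n, h j x) • δ x := by
    intro n x
    induction n with
    | zero => simp [hU0]
    | succ n ih =>
      rw [hUs, ih, map_smul, hTs, smul_smul, Finset.prod_range_succ]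
  have hdist : ∀ μ ∈ W, ∀ n, dist (U n μ) (U (n + 1) μ) ≤ ε / 2 / 2 ^ n := by
    intro μ hμ n
    rw [dist_eq_norm, hUs]
    exact hclose n (U n) μ hμ
  have hconv : ∀ μ ∈ W, ∃ s, Tendsto (fun n => U n μ) atTop (𝓝 s) := fun μ hμ =>
    cauchySeq_tendsto_of_complete (cauchySeq_of_le_geometric_two (hdist μ hμ))
  choose! S hS using hconv
  let K : Set M := {a | ∀ j : ℕ, ∃ e ∈ E j, dist a e ≤ 2 * (1 / (4 * (j + 1 : ℝ))) * dist a o}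
  have hK : IsCompact K := by
    apply IsSeqCompact.isCompact
    intro x hx
    obtain ⟨a, ha, φ, hφ⟩ := seq_lemma o E x (fun k j _ => hx k j)
    exact ⟨a, ha, φ, hφ⟩
  refine ⟨K, S, hK, ?_, ?_, ?_⟩
  · intro μ hμ
    have := dist_le_of_le_geometric_two_of_tendsto₀ (hdist μ hμ) (hS μ hμ)
    rwa [dist_eq_norm, hU0] at this
  · refine VStar_approx W (fun k => U k) S (fun k => VStar_image (U k) hW) ?_
    intro τ hτ
    obtain ⟨k, hk⟩ := exists_nat_gt (ε / τ)
    refine ⟨k, fun μ hμ => ?_⟩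
    have := dist_le_of_le_geometric_two_of_tendsto (hdist μ hμ) (hS μ hμ) k
    rw [dist_comm, dist_eq_norm] at this
    refine this.trans ?_
    rw [div_le_iff₀ (by positivity)]
    have h1 : ε < k * τ := (div_lt_iff₀ hτ).1 hk
    have h2 : (k : ℝ) < 2 ^ k := by exact_mod_cast Nat.lt_two_pow_self
    nlinarith
  · intro μ hμ
    refine mem_of_dual _ (Submodule.isClosed_topologicalClosure _) _ ?_
    intro φ hφ
    have hφK : ∀ x ∈ K, φ (δ x) = 0 := fun x hx => hφ _ (mem_freeSpan δ (Or.inl hx))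
    have hφo : φ (δ o) = 0 := by simp [hδ.map_base]
    have hφlip : LipschitzWith ‖φ‖₊ (fun x => φ (δ x)) := by
      simpa using! φ.lipschitz.comp hδ.isometry.lipschitz
    have hsmall : ∀ η > (0:ℝ), ∃ N : ℕ, ∀ k ≥ N, ∀ x, (∀ j < k, h j x ≠ 0) → |φ (δ x)| < η := by
      intro η hη
      by_contra hcon
      push Not at hcon
      choose k hk x hx hφx using hcon
      obtain ⟨a, ha, θ, hθ, hlim⟩ := seq_lemma o E x (fun n j hj =>
        hsupp j (U j) (x n) (hx n j (hj.trans_le (hk n))))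
      have hc : Tendsto (fun n => |φ (δ (x (θ n)))|) atTop (𝓝 |φ (δ a)|) :=
        ((hφlip.continuous.abs).tendsto a).comp hlim
      rw [hφK a ha, abs_zero] at hc
      have := ge_of_tendsto' hc (fun n => hφx (θ n))
      linarith
    have habs : ∀ τ > (0:ℝ), |φ (S μ)| ≤ τ := by
      intro τ hτ
      obtain ⟨a, ha⟩ := free_finsupp hδ (S μ) (ε := τ / (2 * (‖φ‖ + 1))) (by positivity)
      set sa : ℝ := ∑ i ∈ a.support, |a i| with hsa
      have hsa0 : 0 ≤ sa := Finset.sum_nonneg fun _ _ => abs_nonneg _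
      set η : ℝ := τ / (2 * (sa + 1)) with hηdef
      have hη : 0 < η := by positivity
      obtain ⟨N, hN⟩ := hsmall η hη
      have hglip : LipschitzWith ‖φ‖₊ (fun x => max (min (φ (δ x)) η) (-η)) :=
        (hφlip.min_const η).max_const (-η)
      obtain ⟨ψ, hψ, hψx⟩ := hδ.lift _ _ hglip (by
        rw [hφo, min_eq_left hη.le, max_eq_left (by linarith)])
      have hψη : ∀ x, |ψ (δ x)| ≤ η := by
        intro x
        rw [hψx, abs_le]
        exact ⟨le_max_right _ _, max_le (min_le_right _ _) (by linarith)⟩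
      have heq : ∀ k ≥ N, φ (U k μ) = ψ (U k μ) := by
        intro k hk
        have : φ.comp (U k) = ψ.comp (U k) := by
          apply free_ext hδ
          intro x
          simp only [ContinuousLinearMap.comp_apply, hUδ, map_smul, smul_eq_mul]
          by_cases hx : ∀ j < k, h j x ≠ 0
          · have := abs_lt.1 (hN k hk x hx)
            rw [hψx, min_eq_left this.2.le, max_eq_left this.1.le]
          · push Not at hx
            obtain ⟨j, hj, h0⟩ := hx
            rw [Finset.prod_eq_zero (Finset.mem_range.2 hj) h0]; simp
        exact DFunLike.congr_fun this μ
      have hlimeq : φ (S μ) = ψ (S μ) := by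
        refine tendsto_nhds_unique ((φ.continuous.tendsto _).comp (hS μ hμ)) ?_
        refine ((ψ.continuous.tendsto _).comp (hS μ hμ)).congr' ?_
        filter_upwards [eventually_ge_atTop N] with k hk
        exact (heq k hk).symm
      rw [hlimeq]
      set ν := Finsupp.linearCombination ℝ δ a with hν
      have e1 : |ψ ν| ≤ τ / 2 := by
        have : ψ ν = ∑ i ∈ a.support, a i * ψ (δ i) := by
          simp only [hν, Finsupp.linearCombination_apply, Finsupp.sum, map_sum, map_smul,
            smul_eq_mul]
        rw [this]
        calc _ ≤ ∑ i ∈ a.support, |a i * ψ (δ i)| := Finset.abs_sum_le_sum_abs _ _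
          _ ≤ ∑ i ∈ a.support, |a i| * η := by
              refine Finset.sum_le_sum fun i _ => ?_
              rw [abs_mul]
              exact mul_le_mul_of_nonneg_left (hψη i) (abs_nonneg _)
          _ = sa * η := by rw [← Finset.sum_mul]
          _ ≤ (sa + 1) * η := by gcongr; linarith
          _ = τ / 2 := by rw [hηdef]; field_simp
      have e2 : |ψ (S μ - ν)| ≤ τ / 2 := by
        have : |ψ (S μ - ν)| ≤ ‖φ‖ * ‖S μ - ν‖ := ψ.le_of_opNorm_le (by simpa using hψ) _
        calc _ ≤ ‖φ‖ * ‖S μ - ν‖ := this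
          _ ≤ (‖φ‖ + 1) * (τ / (2 * (‖φ‖ + 1))) := by gcongr; linarith
          _ = τ / 2 := by field_simp
      calc |ψ (S μ)| = |ψ (S μ - ν) + ψ ν| := by rw [← map_add, sub_add_cancel]
        _ ≤ |ψ (S μ - ν)| + |ψ ν| := abs_add_le _ _
        _ ≤ τ := by linarith
    have : |φ (S μ)| ≤ 0 := le_of_forall_pos_le_add (fun τ hτ => by simpa using habs τ hτ)
    exact abs_nonpos_iff.1 this

end free3

/-- Suppose that every compact subset of `M` is contained in a compact Lipschitz retract
of `M`.  Then property (V*) is compactly determined for `F(M)`: if `F(K ∪ {0})` has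
property (V*) for every compact `K ⊆ M`, then `F(M)` has property (V*). -/
theorem propertyVStar_compactlyDetermined_of_compactRetracts
    {M : Type*} [MetricSpace M] [CompleteSpace M] (o : M)
    {F : Type*} [NormedAddCommGroup F] [NormedSpace ℝ F] [CompleteSpace F]
    (δ : M → F) (hδ : IsLipschitzFree o δ)
    (hret : ∀ K : Set M, IsCompact K → ∃ L : Set M, IsCompact L ∧ K ⊆ L ∧
      ∃ π : M → M, (∃ C : NNReal, LipschitzWith C π) ∧ Set.range π ⊆ L ∧
        ∀ x ∈ L, π x = x)
    (hcpt : ∀ K : Set M, IsCompact K → HasPropertyVStar ↥(freeSpan δ (K ∪ {o}))) :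
    HasPropertyVStar F := by
  intro W hW
  refine relWeak_of_approx fun ε hε => ?_
  obtain ⟨K, S, hK, hclose, hSV, hSmem⟩ := tight hδ hW hε
  obtain ⟨L, hL, hKL, π, ⟨C, hπ⟩, hrange, hfix⟩ := hret (K ∪ {o}) (hK.union isCompact_singleton)
  have hmono : freeSpan δ (K ∪ {o}) ≤ freeSpan δ (L ∪ {o}) :=
    Submodule.topologicalClosure_mono (Submodule.span_mono
      (Set.image_mono (hKL.trans Set.subset_union_left)))
  have hoL : o ∈ L := hKL (Or.inr rfl)
  have : CompleteSpace ↥(freeSpan δ (L ∪ {o})) :=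
    (Submodule.isClosed_topologicalClosure _).completeSpace_coe
  have hmem : ∀ x, δ (π x) ∈ freeSpan δ (L ∪ {o}) := fun x =>
    mem_freeSpan δ (Or.inl (hrange ⟨x, rfl⟩))
  obtain ⟨P, hP⟩ := free_lift_vec hδ C
    (fun x => (⟨δ (π x), hmem x⟩ : ↥(freeSpan δ (L ∪ {o}))))
    (LipschitzWith.of_dist_le_mul fun x y => by
      rw [Subtype.dist_eq, hδ.isometry.dist_eq]
      exact hπ.dist_le_mul x y)
    (Subtype.ext (by simp [hfix o hoL, hδ.map_base]))
  have hPid : ∀ v ∈ freeSpan δ (L ∪ {o}), (P v : F) = v := by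
    have hle : freeSpan δ (L ∪ {o}) ≤
        LinearMap.ker (((freeSpan δ (L ∪ {o})).subtypeL.comp P - ContinuousLinearMap.id ℝ F :
          F →L[ℝ] F) : F →ₗ[ℝ] F) := by
      refine Submodule.topologicalClosure_minimal _ ?_ (ContinuousLinearMap.isClosed_ker _)
      rw [Submodule.span_le]
      rintro _ ⟨x, hx, rfl⟩
      have hxL : x ∈ L := by
        rcases hx with hx | hx
        · exact hx
        · rw [Set.mem_singleton_iff.1 hx]; exact hoL
      simp [hP, hfix x hxL]
    intro v hv
    have := hle hv
    simpa [sub_eq_zero] using this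
  have hrw := hcpt L hL _ (VStar_image P hSV)
  refine ⟨_, relWeak_image (freeSpan δ (L ∪ {o})).subtypeL hrw, fun μ hμ => ?_⟩
  refine ⟨S μ, ⟨P (S μ), ⟨S μ, ⟨μ, hμ, rfl⟩, rfl⟩, ?_⟩, hclose μ hμ⟩
  exact hPid _ (hmono (hSmem μ hμ))
end
end

section
/- Let (G, d_cc) be a Carnot–Carathéodory metric space satisfying condition (◇) with exponent α, defined by vector fields X = (X_1,…,X_s), and let x₀ ∈ G. Then there exist a compact d_cc-neighborhood K ⊂ G of x₀, an open connected set Ω ⊂ G with Γ_K ⊂ Ω, and a constant β > 0 such that for every d_cc-Lipschitz function f : G → ℝ and every ε > 0 there exists g : Ω → ℝ satisfying: (i) g is C^∞ on Ω with respect to the Euclidean structure; (ii) sup_{x∈Γ_K} |f(x) − g(x)| < ε; (iii) sup_{x∈Γ_K} ‖X(g)(x)‖_{ℓ₂^s} ≤ Lip(f); (iv) g(x₀) = f(x₀); (v) |g(x) − g(y)| ≤ Lip(f)·β·‖x−y‖₂^α for all x ≠ y ∈ Γ_K. In particular, the restriction of g to K is d_cc-Lipschitz with Lipschitz constant at most Lip(f).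 -/
open Filter Topology Metric Set

noncomputable section

/-- Euclidean space `ℝ^d`. -/
abbrev Euc (d : ℕ) := EuclideanSpace ℝ (Fin d)

/-- The data of a Carnot–Carathéodory space: an open connected set `G ⊆ ℝ^d` together
with a family `X = (X₁, …, X_s)` of vector fields on `G` with locally Lipschitz
coefficients. -/
structure CCData (d s : ℕ) where
  /-- the underlying open connected subset of `ℝ^d` -/
  G : Set (Euc d)
  /-- the family of vector fields -/
  X : Fin s → Euc d → Euc d
  isOpen_G : IsOpen G
  isConnected_G : IsConnected G
  locallyLipschitz_X : ∀ j : Fin s, ∀ x ∈ G, ∃ U ∈ 𝓝 x, ∃ K : NNReal,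
    LipschitzOnWith K (X j) U

/-- A curve `γ` on `[0, b]` is admissible (w.r.t. the vector fields of `S`) if it stays
in `G`, and it is absolutely continuous with derivative `γ'(t) = ∑ⱼ cⱼ(t) Xⱼ(γ(t))`
a.e., for Borel functions `cⱼ` with `∑ⱼ cⱼ(t)² ≤ 1`.  (Absolute continuity is expressed
by `γ` being the indefinite integral of an integrable function.) -/
def CCData.Admissible {d s : ℕ} (S : CCData d s) (b : ℝ) (γ : ℝ → Euc d) : Prop :=
  0 ≤ b ∧ (∀ t ∈ Set.Icc (0 : ℝ) b, γ t ∈ S.G) ∧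
  ∃ c : Fin s → ℝ → ℝ,
    (∀ j, Measurable (c j)) ∧
    (∀ t ∈ Set.Icc (0 : ℝ) b, ∑ j, (c j t) ^ 2 ≤ 1) ∧
    MeasureTheory.IntegrableOn (fun t => ∑ j, c j t • S.X j (γ t)) (Set.Icc (0 : ℝ) b) ∧
    ∀ t ∈ Set.Icc (0 : ℝ) b, γ t = γ 0 + ∫ u in (0 : ℝ)..t, ∑ j, c j u • S.X j (γ u)

/-- The Carnot–Carathéodory distance associated with the vector fields of `S`:
the infimum of `b ≥ 0` such that an admissible curve joins `x` to `y` in time `b`. -/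
def CCData.ccDist {d s : ℕ} (S : CCData d s) (x y : Euc d) : ℝ :=
  sInf {b | ∃ γ : ℝ → Euc d, S.Admissible b γ ∧ γ 0 = x ∧ γ b = y}

/-- Every two points of `G` are joined by an admissible curve, so that `d_cc` is
finite everywhere (`(G, d_cc)` is a Carnot–Carathéodory metric space). -/
def CCData.Connects {d s : ℕ} (S : CCData d s) : Prop :=
  ∀ x ∈ S.G, ∀ y ∈ S.G, ∃ b γ, S.Admissible b γ ∧ γ 0 = x ∧ γ b = y

/-- Condition (◇) with exponent `α`: for every bounded `K ⊆ G` there are constants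
`C₁, C₂ > 0` with `C₁‖x − y‖₂ ≤ d_cc(x, y) ≤ C₂‖x − y‖₂^α` for all `x, y ∈ K`. -/
def CCData.Diamond {d s : ℕ} (S : CCData d s) (α : ℝ) : Prop :=
  ∀ K : Set (Euc d), K ⊆ S.G → Bornology.IsBounded K →
    ∃ C₁ > (0 : ℝ), ∃ C₂ > (0 : ℝ), ∀ x ∈ K, ∀ y ∈ K,
      C₁ * ‖x - y‖ ≤ S.ccDist x y ∧ S.ccDist x y ≤ C₂ * ‖x - y‖ ^ α

/-- The pointed metric space `M` is (a realization of) the metric space `(G, d_cc)`: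
`ι` is a bijection of `M` onto `G` and the metric of `M` corresponds to `d_cc`. -/
structure CCRepresentation {d s : ℕ} (S : CCData d s) (M : Type*) [MetricSpace M]
    (ι : M → Euc d) : Prop where
  injective : Function.Injective ι
  range_eq : Set.range ι = S.G
  dist_eq : ∀ x y : M, dist x y = S.ccDist (ι x) (ι y)

/-- `γ` is a geodesic curve joining `p` and `q`: an isometric embedding of
`[0, d(p,q)]` with `γ(0) = p` and `γ(d(p,q)) = q`. -/
def IsGeodesicCurve {M : Type*} [MetricSpace M] (p q : M) (γ : ℝ → M) : Prop :=
  γ 0 = p ∧ γ (dist p q) = q ∧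
    ∀ t₁ ∈ Set.Icc (0 : ℝ) (dist p q), ∀ t₂ ∈ Set.Icc (0 : ℝ) (dist p q),
      dist (γ t₁) (γ t₂) = |t₁ - t₂|

/-- `Γ_K`: the closure of the union of the images of all geodesic curves joining pairs
of distinct points of `K`. -/
def geodesicHull {M : Type*} [MetricSpace M] (K : Set M) : Set M :=
  closure (⋃ (p ∈ K) (q ∈ K) (_ : p ≠ q)
    (γ : ℝ → M) (_ : IsGeodesicCurve p q γ), γ '' Set.Icc (0 : ℝ) (dist p q))

/-- Local flow of a Lipschitz vector field with elementary estimates. -/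
lemma cc_flow {E : Type*} [NormedAddCommGroup E] [NormedSpace ℝ E] [CompleteSpace E]
    (p : E) (R : ℝ) (hR : 0 < R) (Λ Mb : NNReal) (Y : E → E)
    (hY : LipschitzOnWith Λ Y (closedBall p (3 * R)))
    (hM : ∀ x ∈ closedBall p (3 * R), ‖Y x‖ ≤ Mb) :
    ∃ τ > (0 : ℝ), ∃ Φ : E → ℝ → E, ∀ y ∈ closedBall p (2 * R), Φ y 0 = y ∧
      ∀ t ∈ Icc 0 τ, Φ y t ∈ closedBall p (3 * R) ∧
        HasDerivWithinAt (Φ y) (Y (Φ y t)) (Icc 0 τ) t := by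
  set τ : ℝ := R / (Mb + 1) with hτ
  have hM1 : (0 : ℝ) < Mb + 1 := by positivity
  have hτ0 : 0 < τ := by positivity
  have hpl : IsPicardLindelof (fun _ : ℝ => Y) (tmin := 0) (tmax := τ)
      ⟨0, le_rfl, hτ0.le⟩ p (3 * R).toNNReal (2 * R).toNNReal Mb Λ := by
    have e3 : ((3 * R).toNNReal : ℝ) = 3 * R := Real.coe_toNNReal _ (by positivity)
    have e2 : ((2 * R).toNNReal : ℝ) = 2 * R := Real.coe_toNNReal _ (by positivity)
    refine ⟨?_, ?_, ?_, ?_⟩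
    · intro t _; rw [e3]; exact hY
    · intro x _; exact continuousOn_const
    · intro t _; rw [e3]; exact hM
    · rw [e3, e2]
      simp only [sub_zero, sub_self]
      rw [max_eq_left hτ0.le, hτ]
      rw [mul_div_assoc', div_le_iff₀ hM1]
      nlinarith [Mb.coe_nonneg]
  have e3 : ((3 * R).toNNReal : ℝ) = 3 * R := Real.coe_toNNReal _ (by positivity)
  have e2 : ((2 * R).toNNReal : ℝ) = 2 * R := Real.coe_toNNReal _ (by positivity)
  have key : ∀ y : E, ∃ γ : ℝ → E, y ∈ closedBall p (2 * R) → γ 0 = y ∧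
      ∀ t ∈ Icc 0 τ, γ t ∈ closedBall p (3 * R) ∧
        HasDerivWithinAt γ (Y (γ t)) (Icc 0 τ) t := by
    intro y
    by_cases hy : y ∈ closedBall p (2 * R)
    · have hy' : y ∈ closedBall p ((2 * R).toNNReal : ℝ) := by rw [e2]; exact hy
      obtain ⟨α, hα⟩ := ODE.FunSpace.exists_isFixedPt_next hpl hy'
      have h0 : α.compProj 0 = y := by
        have := ODE.FunSpace.compProj_val (α := α) (t := ⟨0, le_rfl, hτ0.le⟩)
        simp only at this
        rw [this, ← hα, ODE.FunSpace.next_apply₀]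
      have hmem : ∀ t, α.compProj t ∈ closedBall p (3 * R) := by
        intro t
        have := α.compProj_mem_closedBall hpl.mul_max_le (t := t)
        rwa [e3] at this
      refine ⟨α.compProj, fun _ => ⟨h0, fun t ht => ⟨hmem t, ?_⟩⟩⟩
      apply ODE.hasDerivWithinAt_picard_Icc (f := fun _ => Y) (t₀ := 0) ⟨le_rfl, hτ0.le⟩
        hpl.continuousOn_uncurry
        α.continuous_compProj.continuousOn (fun _ ht' ↦ α.compProj_mem_closedBall hpl.mul_max_le)
        y ht |>.congr_of_mem _ ht
      intro t' ht'
      nth_rw 1 [← hα]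
      rw [ODE.FunSpace.compProj_of_mem ht', ODE.FunSpace.next_apply]
    · exact ⟨fun _ => y, fun h => absurd h hy⟩
  choose Φ hΦ using key
  exact ⟨τ, hτ0, Φ, hΦ⟩

lemma cc_flow_est {E : Type*} [NormedAddCommGroup E] [NormedSpace ℝ E]
    {s : Set E} {τ : ℝ} {Λ Mb : NNReal} {Y : E → E}
    (hY : LipschitzOnWith Λ Y s)
    (hM : ∀ x ∈ s, ‖Y x‖ ≤ Mb) {γ : ℝ → E}
    (h : ∀ t ∈ Icc 0 τ, γ t ∈ s ∧ HasDerivWithinAt γ (Y (γ t)) (Icc 0 τ) t) :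
    (∀ t ∈ Icc 0 τ, ‖γ t - γ 0‖ ≤ Mb * t) ∧
    (∀ x ∈ s, ∀ t ∈ Icc 0 τ, ‖γ t - γ 0 - t • Y x‖ ≤ Λ * (‖γ 0 - x‖ + Mb * t) * t) := by
  have h1 : ∀ t ∈ Icc 0 τ, ‖γ t - γ 0‖ ≤ Mb * t := by
    intro t ht
    have := norm_image_sub_le_of_norm_deriv_le_segment' (f := γ) (a := 0) (b := τ)
      (fun t ht => (h t ht).2) (C := Mb) (fun t ht => hM _ (h t (Ico_subset_Icc_self ht)).1) t ht
    simpa using this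
  refine ⟨h1, ?_⟩
  intro x hx t ht
  have hsub : Icc 0 t ⊆ Icc 0 τ := Icc_subset_Icc le_rfl ht.2
  have := norm_image_sub_le_of_norm_deriv_le_segment' (f := fun u => γ u - u • Y x)
    (f' := fun u => Y (γ u) - (1 : ℝ) • Y x) (a := 0) (b := t) (C := Λ * (‖γ 0 - x‖ + Mb * t))
    (fun u hu => ((h u (hsub hu)).2.mono hsub).sub ((hasDerivWithinAt_id u _).smul_const (Y x)))
    ?_ t ⟨ht.1, le_rfl⟩
  · simp only [zero_smul, sub_zero] at this
    rwa [sub_right_comm] at this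
  · intro u hu
    have hu' := hsub (Ico_subset_Icc_self hu)
    rw [one_smul]
    refine (hY.norm_sub_le (h u hu').1 hx).trans ?_
    gcongr
    calc ‖γ u - x‖ = ‖(γ u - γ 0) + (γ 0 - x)‖ := by abel_nf
      _ ≤ ‖γ u - γ 0‖ + ‖γ 0 - x‖ := norm_add_le _ _
      _ ≤ Mb * u + ‖γ 0 - x‖ := by gcongr; exact h1 u hu'
      _ ≤ Mb * t + ‖γ 0 - x‖ := by gcongr; exact hu.2.le
      _ = _ := by ring

lemma cc_flow_lip {E : Type*} [NormedAddCommGroup E] [NormedSpace ℝ E]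
    {s : Set E} {τ : ℝ} {Λ : NNReal} {Y : E → E}
    (hY : LipschitzOnWith Λ Y s) {γ η : ℝ → E}
    (h : ∀ t ∈ Icc 0 τ, γ t ∈ s ∧ HasDerivWithinAt γ (Y (γ t)) (Icc 0 τ) t)
    (h' : ∀ t ∈ Icc 0 τ, η t ∈ s ∧ HasDerivWithinAt η (Y (η t)) (Icc 0 τ) t) :
    ∀ t ∈ Icc 0 τ, Λ * t ≤ 1 → ‖γ t - η t‖ ≤ 3 * ‖γ 0 - η 0‖ ∧
      (1 - 3 * Λ * t) * ‖γ 0 - η 0‖ ≤ ‖γ t - η t‖ := by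
  have hci : ∀ t ∈ Ico 0 τ, ∀ f : ℝ → E, ∀ f', HasDerivWithinAt f f' (Icc 0 τ) t →
      HasDerivWithinAt f f' (Ici t) t := by
    intro t ht f f' hf
    exact hf.mono_of_mem_nhdsWithin (Icc_mem_nhdsGE_of_mem ht)
  have h1 : ∀ t ∈ Icc 0 τ, Λ * t ≤ 1 → ‖γ t - η t‖ ≤ 3 * ‖γ 0 - η 0‖ := by
    intro t ht hΛ
    have := dist_le_of_trajectories_ODE_of_mem (v := fun _ => Y) (s := fun _ => s) (K := Λ)
      (f := γ) (g := η) (a := 0) (b := τ) (δ := dist (γ 0) (η 0)) (fun _ _ => hY)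
      (fun t ht => (h t ht).2.continuousWithinAt)
      (fun t ht => hci t ht _ _ (h t (Ico_subset_Icc_self ht)).2)
      (fun t ht => (h t (Ico_subset_Icc_self ht)).1)
      (fun t ht => (h' t ht).2.continuousWithinAt)
      (fun t ht => hci t ht _ _ (h' t (Ico_subset_Icc_self ht)).2)
      (fun t ht => (h' t (Ico_subset_Icc_self ht)).1) le_rfl t ht
    rw [dist_eq_norm, dist_eq_norm, sub_zero] at this
    refine this.trans ?_
    rw [mul_comm]
    gcongr
    have := Real.exp_one_lt_d9
    linarith [Real.exp_le_exp.2 hΛ]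
  intro t ht hΛ
  refine ⟨h1 t ht hΛ, ?_⟩
  have hsub : Icc 0 t ⊆ Icc 0 τ := Icc_subset_Icc le_rfl ht.2
  have := norm_image_sub_le_of_norm_deriv_le_segment' (f := fun u => γ u - η u)
    (f' := fun u => Y (γ u) - Y (η u)) (a := 0) (b := t) (C := Λ * (3 * ‖γ 0 - η 0‖))
    (fun u hu => ((h u (hsub hu)).2.mono hsub).sub ((h' u (hsub hu)).2.mono hsub))
    ?_ t ⟨ht.1, le_rfl⟩
  · simp only [sub_zero] at this
    have h3 := norm_sub_norm_le (γ 0 - η 0) (γ t - η t)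
    rw [norm_sub_rev (γ 0 - η 0) (γ t - η t)] at h3
    linarith
  · intro u hu
    have hu' := hsub (Ico_subset_Icc_self hu)
    refine (hY.norm_sub_le (h u hu').1 (h' u hu').1).trans ?_
    gcongr
    apply h1 u hu'
    refine le_trans ?_ hΛ
    gcongr
    exact hu.2.le
open MeasureTheory Measure Module in
lemma cc_transport {E : Type*} [NormedAddCommGroup E] [NormedSpace ℝ E] [FiniteDimensional ℝ E]
    [MeasurableSpace E] [BorelSpace E] {A : Set E} (hA : MeasurableSet A) {T : E → E}
    (hT : ContinuousOn T A) {κ : ℝ} (hκ : 0 < κ)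
    (hanti : ∀ y ∈ A, ∀ y' ∈ A, κ * ‖y - y'‖ ≤ ‖T y - T y'‖)
    {h : E → ℝ} (h0 : ∀ x, 0 ≤ h x) (hi : Integrable h (μH[finrank ℝ E] : Measure E)) :
    IntegrableOn (fun y => h (T y)) A (μH[finrank ℝ E] : Measure E) ∧
    κ ^ finrank ℝ E * ∫ y in A, h (T y) ∂(μH[finrank ℝ E] : Measure E)
      ≤ ∫ y, h y ∂(μH[finrank ℝ E] : Measure E) := by
  set n := finrank ℝ E with hn
  set μ : Measure E := μH[n] with hμ
  set k : NNReal := Real.toNNReal κ⁻¹ with hk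
  have hkc : (k : ℝ) = κ⁻¹ := Real.coe_toNNReal _ (by positivity)
  have hinj : InjOn T A := by
    intro y hy y' hy' he
    have := hanti y hy y' hy'
    rw [he, sub_self, norm_zero] at this
    have h2 : ‖y - y'‖ ≤ 0 := by
      by_contra hc
      push Not at hc
      nlinarith [mul_pos hκ hc]
    exact sub_eq_zero.1 (norm_le_zero_iff.1 h2)
  have hTm : AEMeasurable T (μ.restrict A) := hT.aemeasurable hA
  have hle : Measure.map T (μ.restrict A) ≤ (k ^ n : NNReal) • μ := by
    refine Measure.le_iff.2 fun B hB => ?_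
    rw [Measure.map_apply_of_aemeasurable hTm hB, Measure.restrict_apply' hA]
    have hl : LipschitzOnWith k (Function.invFunOn T A) (T '' (T ⁻¹' B ∩ A)) := by
      refine LipschitzOnWith.of_dist_le_mul ?_
      rintro _ ⟨y, ⟨_, hy⟩, rfl⟩ _ ⟨y', ⟨_, hy'⟩, rfl⟩
      rw [hinj.leftInvOn_invFunOn hy, hinj.leftInvOn_invFunOn hy', dist_eq_norm, dist_eq_norm, hkc,
        inv_mul_eq_div, le_div_iff₀ hκ, mul_comm]
      exact hanti y hy y' hy'
    have himg : T ⁻¹' B ∩ A ⊆ Function.invFunOn T A '' (T '' (T ⁻¹' B ∩ A)) := by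
      intro y hy
      exact ⟨T y, ⟨y, hy, rfl⟩, hinj.leftInvOn_invFunOn hy.2⟩
    calc μ (T ⁻¹' B ∩ A) ≤ μ (Function.invFunOn T A '' (T '' (T ⁻¹' B ∩ A))) := measure_mono himg
      _ ≤ (k : ENNReal) ^ (n : ℝ) * μ (T '' (T ⁻¹' B ∩ A)) :=
          hl.hausdorffMeasure_image_le (by positivity)
      _ ≤ (k : ENNReal) ^ (n : ℝ) * μ B := by
          gcongr
          rintro _ ⟨y, hy, rfl⟩
          exact hy.1
      _ = _ := by
          rw [ENNReal.rpow_natCast, Measure.smul_apply, ENNReal.smul_def, smul_eq_mul]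
          simp
  have hi2 : Integrable h ((k ^ n : NNReal) • μ) := hi.smul_measure_nnreal
  have hi3 : Integrable h (Measure.map T (μ.restrict A)) := hi2.mono_measure hle
  refine ⟨hi3.comp_aemeasurable hTm, ?_⟩
  rw [← integral_map hTm hi3.aestronglyMeasurable]
  have := integral_mono_measure hle (Eventually.of_forall h0) hi2
  rw [integral_smul_nnreal_measure, NNReal.smul_def, NNReal.coe_pow, hkc, smul_eq_mul] at this
  calc _ ≤ κ ^ n * (κ⁻¹ ^ n * ∫ y, h y ∂μ) := by gcongr
    _ = _ := by rw [← mul_assoc, ← mul_pow, mul_inv_cancel₀ hκ.ne', one_pow, one_mul]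

open MeasureTheory Measure Module in
lemma cc_mollifier {E : Type*} [NormedAddCommGroup E] [InnerProductSpace ℝ E]
    [FiniteDimensional ℝ E]
    [MeasurableSpace E] [BorelSpace E] (μ : Measure E) [μ.IsAddHaarMeasure] :
    ∃ C : ℝ, 0 ≤ C ∧ ∀ δ > (0 : ℝ), ∃ φ : E → ℝ, ∃ l : NNReal, ContDiff ℝ (⊤ : ℕ∞) φ ∧
      (∀ z, 0 ≤ φ z) ∧ (∀ z, δ ≤ ‖z‖ → φ z = 0) ∧ ∫ z, φ z ∂μ = 1 ∧ LipschitzWith l φ ∧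
      l * δ * μ.real (closedBall 0 (2 * δ)) ≤ C := by
  let b : ContDiffBump (0 : E) := ⟨1/2, 1, by norm_num, by norm_num⟩
  set ψ := b.normed μ with hψ
  have hψs : ContDiff ℝ (⊤ : ℕ∞) ψ := b.contDiff_normed
  obtain ⟨l, hl⟩ := ContDiff.lipschitzWith_of_hasCompactSupport (𝕂 := ℝ)
    (b.hasCompactSupport_normed (μ := μ)) hψs (by simp)
  set n := finrank ℝ E
  refine ⟨l * μ.real (closedBall 0 2), by positivity, fun δ hδ => ?_⟩
  refine ⟨fun z => (δ⁻¹) ^ n * ψ (δ⁻¹ • z), (δ⁻¹.toNNReal) ^ n * (l * δ⁻¹.toNNReal), ?_, ?_, ?_,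
    ?_, ?_, ?_⟩
  · exact contDiff_const.mul (hψs.comp (contDiff_const_smul _))
  · intro z
    have := b.nonneg_normed (μ := μ) (δ⁻¹ • z)
    positivity
  · intro z hz
    have : δ⁻¹ • z ∉ Function.support ψ := by
      rw [hψ, b.support_normed_eq]
      simp only [mem_ball, dist_zero_right, not_lt, norm_smul, norm_inv, Real.norm_eq_abs,
        abs_of_pos hδ]
      change 1 ≤ _
      rw [inv_mul_eq_div, le_div_iff₀ hδ]; linarith
    simp only [Function.notMem_support.1 this, mul_zero]
  · rw [integral_const_mul, Measure.integral_comp_inv_smul, b.integral_normed, abs_of_pos (by positivity)]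
    simp only [smul_eq_mul, mul_one]
    rw [← mul_pow, inv_mul_cancel₀ hδ.ne', one_pow]
  · refine LipschitzWith.of_dist_le_mul fun x y => ?_
    have := hl.dist_le_mul (δ⁻¹ • x) (δ⁻¹ • y)
    rw [dist_smul₀, Real.norm_eq_abs, abs_of_pos (by positivity)] at this
    push_cast
    rw [Real.coe_toNNReal _ (by positivity)]
    rw [Real.dist_eq, ← mul_sub, abs_mul, abs_of_pos (by positivity), mul_assoc, mul_assoc]
    gcongr
    exact this
  · have : μ.real (closedBall (0 : E) (2 * δ)) = δ ^ n * μ.real (closedBall (0 : E) 2) := by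
      rw [mul_comm 2 δ, measureReal_def, addHaar_closedBall_mul_of_pos μ 0 hδ 2, ENNReal.toReal_mul,
        ENNReal.toReal_ofReal (by positivity), measureReal_def]
    rw [this]
    push_cast
    rw [Real.coe_toNNReal _ (by positivity)]
    apply le_of_eq
    rw [inv_pow]
    field_simp

open MeasureTheory Measure Module in
lemma cc_key {E : Type*} [NormedAddCommGroup E] [InnerProductSpace ℝ E]
    [FiniteDimensional ℝ E] [MeasurableSpace E] [BorelSpace E]
    {p : E} {R : ℝ} (hR : 0 < R) {Λ Mb : NNReal} {Y : E → E}
    (hY : LipschitzOnWith Λ Y (closedBall p (3 * R)))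
    (hM : ∀ x ∈ closedBall p (3 * R), ‖Y x‖ ≤ Mb)
    {F : E → ℝ} (hFi : Integrable F (μH[finrank ℝ E] : Measure E))
    (hFc : ContinuousOn F (closedBall p (3 * R)))
    {L : ℝ} (hflow : ∀ τ ≥ (0 : ℝ), ∀ γ : ℝ → E, (∀ t ∈ Icc 0 τ, γ t ∈ closedBall p (3 * R) ∧
        HasDerivWithinAt γ (Y (γ t)) (Icc 0 τ) t) → F (γ τ) - F (γ 0) ≤ L * τ)
    {δ : ℝ} (hδ : 0 < δ) (hδR : 2 * δ ≤ R) {φ : E → ℝ} {l : NNReal} {C : ℝ}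
    (hφ0 : ∀ z, 0 ≤ φ z) (hφs : ∀ z, δ ≤ ‖z‖ → φ z = 0)
    (hφ1 : ∫ z, φ z ∂(μH[finrank ℝ E] : Measure E) = 1) (hφl : LipschitzWith l φ)
    (hC : l * δ * (μH[finrank ℝ E] : Measure E).real (closedBall 0 (2 * δ)) ≤ C)
    {x : E} (hx : x ∈ ball p R) {ω : ℝ} (hω : ∀ y ∈ closedBall x (2 * δ), |F y - F x| ≤ ω)
    {g : E → ℝ} (hg : ∀ z, g z = ∫ w, φ (z - w) * F w ∂(μH[finrank ℝ E] : Measure E))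
    (hgd : DifferentiableAt ℝ g x) :
    fderiv ℝ g x (Y x) ≤ L + ω * (4 * Λ * C + 6 * (finrank ℝ E) * Λ) := by
  set n := finrank ℝ E with hn
  set μ : Measure E := μH[n] with hμ
  have hφc : Continuous φ := hφl.continuous
  obtain ⟨τ, hτ, Φ, hΦ⟩ := cc_flow p R hR Λ Mb Y hY hM
  have hω0 : 0 ≤ ω := (abs_nonneg _).trans (hω x (mem_closedBall_self (by positivity)))
  have hxp : dist x p < R := hx
  have hx2 : closedBall x (2 * δ) ⊆ closedBall p (2 * R) :=
    closedBall_subset_closedBall' (by linarith)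
  have hp23 : closedBall p (2 * R) ⊆ closedBall p (3 * R) :=
    closedBall_subset_closedBall (by linarith)
  have hx1 : closedBall x δ ⊆ closedBall x (2 * δ) :=
    closedBall_subset_closedBall (by linarith)
  have hxx : x ∈ closedBall p (3 * R) := hp23 (hx2 (mem_closedBall_self (by positivity)))
  -- support integral facts
  have hφint : ∀ z, ∫ w, φ (z - w) ∂μ = 1 := fun z => by
    rw [integral_sub_left_eq_self φ μ z, hφ1]
  have hφI : Integrable φ μ := by
    by_contra hc
    rw [integral_undef hc] at hφ1
    exact zero_ne_one hφ1
  have hφI' : ∀ z, Integrable (fun w => φ (z - w)) μ := fun z => hφI.comp_sub_left z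
  have hφbd : ∃ B, ∀ z, ‖φ z‖ ≤ B := by
    have hcs : HasCompactSupport φ := by
      refine HasCompactSupport.intro (isCompact_closedBall 0 δ) fun w hw => hφs w ?_
      rw [mem_closedBall, dist_zero_right] at hw
      exact (not_le.1 hw).le
    exact hcs.exists_bound_of_continuous hφc
  have hφF : ∀ z, Integrable (fun w => φ (z - w) * F w) μ := fun z => by
    obtain ⟨B, hB⟩ := hφbd
    exact hFi.bdd_mul (c := B) (by fun_prop) (Eventually.of_forall fun w => hB _)
  set m := F x + ω with hm
  have hh0 : ∀ w ∈ closedBall x (2 * δ), 0 ≤ m - F w := fun w hw => by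
    have := abs_le.1 (hω w hw); rw [hm]; linarith
  have hh2 : ∀ w ∈ closedBall x (2 * δ), m - F w ≤ 2 * ω := fun w hw => by
    have := abs_le.1 (hω w hw); rw [hm]; linarith
  have hmg : ∀ z, ∫ w, φ (z - w) * (m - F w) ∂μ = m - g z := by
    intro z
    simp only [mul_sub]
    rw [integral_sub ((hφI' z).mul_const m) (hφF z), integral_mul_const, hφint, one_mul, hg]
  have hmI : ∀ z, Integrable (fun w => φ (z - w) * (m - F w)) μ := by
    intro z
    simp only [mul_sub]
    exact ((hφI' z).mul_const m).sub (hφF z)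
  set A := closedBall x δ with hAdef
  have hAm : MeasurableSet A := measurableSet_closedBall
  have hAc : IsCompact A := isCompact_closedBall x δ
  have hAzero : ∀ f : E → ℝ, ∫ w in A, φ (x - w) * f w ∂μ = ∫ w, φ (x - w) * f w ∂μ := by
    intro f
    apply setIntegral_eq_integral_of_forall_compl_eq_zero
    intro w hw
    rw [hφs, zero_mul]
    rw [hAdef, mem_closedBall, dist_comm, dist_eq_norm] at hw
    exact (not_le.1 hw).le
  have hφA : ∫ w in A, φ (x - w) ∂μ = 1 := by
    have := hAzero (fun _ => 1)
    simpa [hφint] using this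
  -- the main inequality
  have main : ∀ t : ℝ, 0 < t → t ≤ τ → 6 * (n + 1) * Λ * t ≤ 1 → Mb * t ≤ δ →
      g (x + t • Y x) - g x ≤ t * (L + ω * (4 * Λ * C + 6 * n * Λ)) := by
    intro t ht0 htτ htΛ htM
    have ht : t ∈ Icc 0 τ := ⟨ht0.le, htτ⟩
    have hΛt : 0 ≤ Λ * t := by positivity
    have hnn : (0 : ℝ) ≤ n := by positivity
    have hΛ1 : Λ * t ≤ 1 / 6 := by nlinarith
    have hnΛ : 3 * n * (Λ * t) ≤ 1 := by nlinarith
    set T : E → E := fun y => Φ y t with hTdef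
    have hAin : ∀ y ∈ A, y ∈ closedBall p (2 * R) := fun y hy => hx2 (hx1 hy)
    have hsol : ∀ y ∈ A, ∀ t ∈ Icc 0 τ, Φ y t ∈ closedBall p (3 * R) ∧
        HasDerivWithinAt (Φ y) (Y (Φ y t)) (Icc 0 τ) t := fun y hy => (hΦ y (hAin y hy)).2
    have h0 : ∀ y ∈ A, Φ y 0 = y := fun y hy => (hΦ y (hAin y hy)).1
    have hTlip : LipschitzOnWith 3 T A := by
      refine LipschitzOnWith.of_dist_le_mul fun y hy y' hy' => ?_
      have := (cc_flow_lip hY (hsol y hy) (hsol y' hy') t ht (by linarith)).1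
      rw [h0 y hy, h0 y' hy'] at this
      rw [dist_eq_norm, dist_eq_norm]
      simpa using this
    have hTc : ContinuousOn T A := hTlip.continuousOn
    have hTanti : ∀ y ∈ A, ∀ y' ∈ A, (1 - 3 * Λ * t) * ‖y - y'‖ ≤ ‖T y - T y'‖ := by
      intro y hy y' hy'
      have := (cc_flow_lip hY (hsol y hy) (hsol y' hy') t ht (by linarith)).2
      rwa [h0 y hy, h0 y' hy'] at this
    have hTnear : ∀ y ∈ A, ‖T y - y‖ ≤ Mb * t := by
      intro y hy
      have := (cc_flow_est hY hM (hsol y hy)).1 t ht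
      rwa [h0 y hy] at this
    have hTA : ∀ y ∈ A, T y ∈ closedBall x (2 * δ) := by
      intro y hy
      rw [mem_closedBall]
      have h1 : dist y x ≤ δ := hy
      have h2 := hTnear y hy
      rw [← dist_eq_norm] at h2
      linarith [dist_triangle (T y) y x]
    have hTe : ∀ y ∈ A, ‖T y - y - t • Y x‖ ≤ Λ * (2 * δ) * t := by
      intro y hy
      have := (cc_flow_est hY hM (hsol y hy)).2 x hxx t ht
      rw [h0 y hy] at this
      have h1 : ‖y - x‖ ≤ δ := by rw [← dist_eq_norm]; exact hy
      refine this.trans ?_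
      gcongr
      linarith
    have hFT : ∀ y ∈ A, F (T y) - F y ≤ L * t := by
      intro y hy
      have hsub : Icc 0 t ⊆ Icc 0 τ := Icc_subset_Icc le_rfl htτ
      have := hflow t ht0.le (Φ y) (fun u hu => ⟨(hsol y hy u (hsub hu)).1,
        (hsol y hy u (hsub hu)).2.mono hsub⟩)
      rwa [h0 y hy] at this
    -- integrand
    set z := x + t • Y x with hz
    set k : E → ℝ := fun w => φ (z - w) * (m - F w) with hk
    have hzx : dist z x ≤ δ := by
      rw [hz, dist_eq_norm, add_sub_cancel_left, norm_smul, Real.norm_eq_abs, abs_of_pos ht0]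
      have := hM x hxx
      calc t * ‖Y x‖ ≤ t * Mb := by gcongr
        _ ≤ δ := by linarith
    have hk0 : ∀ w, 0 ≤ k w := by
      intro w
      by_cases hw : δ ≤ ‖z - w‖
      · simp [hk, hφs _ hw]
      · refine mul_nonneg (hφ0 _) (hh0 w ?_)
        rw [mem_closedBall]
        rw [← dist_eq_norm, dist_comm] at hw
        linarith [dist_triangle w z x]
    have hκ : (0 : ℝ) < 1 - 3 * Λ * t := by linarith
    obtain ⟨hkI, hkle⟩ := cc_transport hAm hTc hκ hTanti hk0 (hmI z)
    rw [hmg] at hkle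
    have hFTc : ContinuousOn (fun y => F (T y)) A :=
      hFc.comp hTc fun y hy => hp23 (hx2 (hTA y hy))
    have hQI : IntegrableOn (fun y => φ (x - y) * (m - F (T y))) A μ := by
      apply ContinuousOn.integrableOn_compact hAc
      exact (hφc.comp (continuous_const.sub continuous_id)).continuousOn.mul
        (continuousOn_const.sub hFTc)
    set Q := ∫ y in A, φ (x - y) * (m - F (T y)) ∂μ with hQ
    set Q' := ∫ y in A, k (T y) ∂μ with hQ'
    have hφAI : IntegrableOn (fun y => φ (x - y)) A μ := (hφI' x).integrableOn
    have hQ2 : Q ≤ 2 * ω := by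
      calc Q ≤ ∫ y in A, φ (x - y) * (2 * ω) ∂μ := by
            apply setIntegral_mono_on hQI (hφAI.mul_const _) hAm
            intro y hy
            exact mul_le_mul_of_nonneg_left (hh2 _ (hTA y hy)) (hφ0 _)
        _ = 2 * ω := by rw [integral_mul_const, hφA, one_mul]
    have hQlow : m - g x - L * t ≤ Q := by
      calc m - g x - L * t = ∫ y in A, (φ (x - y) * (m - F y) - φ (x - y) * (L * t)) ∂μ := by
            rw [integral_sub (hmI x).integrableOn (hφAI.mul_const _), hAzero, hmg,
              integral_mul_const, hφA, one_mul]
        _ ≤ Q := by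
            apply setIntegral_mono_on ((hmI x).integrableOn.sub (hφAI.mul_const _)) hQI hAm
            intro y hy
            simp only [Pi.sub_apply]
            rw [← mul_sub]
            apply mul_le_mul_of_nonneg_left _ (hφ0 _)
            linarith [hFT y hy]
    set D := l * (Λ * (2 * δ) * t) * (2 * ω) * μ.real A with hD
    have hQup : Q ≤ Q' + D := by
      have hcI : IntegrableOn (fun _ : E => l * (Λ * (2 * δ) * t) * (2 * ω)) A μ :=
        integrableOn_const hAc.measure_lt_top.ne
      calc Q ≤ ∫ y in A, (k (T y) + l * (Λ * (2 * δ) * t) * (2 * ω)) ∂μ := by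
            apply setIntegral_mono_on hQI (hkI.add hcI) hAm
            intro y hy
            have hd := hφl.dist_le_mul (x - y) (z - T y)
            have he : dist (x - y) (z - T y) = ‖T y - y - t • Y x‖ := by
              rw [dist_eq_norm, hz]; congr 1; abel
            rw [he, Real.dist_eq] at hd
            have h1 : φ (x - y) ≤ φ (z - T y) + l * (Λ * (2 * δ) * t) := by
              have h2 : l * ‖T y - y - t • Y x‖ ≤ l * (Λ * (2 * δ) * t) := by
                gcongr; exact hTe y hy
              linarith [le_abs_self (φ (x - y) - φ (z - T y))]
            calc φ (x - y) * (m - F (T y)) ≤ (φ (z - T y) + l * (Λ * (2 * δ) * t)) * (m - F (T y)) :=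
                  mul_le_mul_of_nonneg_right h1 (hh0 _ (hTA y hy))
              _ = k (T y) + l * (Λ * (2 * δ) * t) * (m - F (T y)) := by rw [hk]; ring
              _ ≤ _ := by
                  exact add_le_add le_rfl (mul_le_mul_of_nonneg_left (hh2 _ (hTA y hy)) (by positivity))
        _ = Q' + D := by
            rw [integral_add hkI hcI, setIntegral_const, smul_eq_mul, hD, mul_comm (μ.real A)]
    have hDle : D ≤ 4 * Λ * C * ω * t := by
      have hAle : μ.real A ≤ μ.real (closedBall 0 (2 * δ)) := by
        rw [← addHaar_real_closedBall_center μ x (2 * δ)]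
        exact measureReal_mono hx1 (isCompact_closedBall _ _).measure_lt_top.ne
      calc D ≤ l * (Λ * (2 * δ) * t) * (2 * ω) * μ.real (closedBall 0 (2 * δ)) := by
            rw [hD]; gcongr
        _ = (4 * Λ * ω * t) * (l * δ * μ.real (closedBall 0 (2 * δ))) := by ring
        _ ≤ (4 * Λ * ω * t) * C := by gcongr
        _ = _ := by ring
    have hD0 : 0 ≤ D := by positivity
    have hQ'0 : 0 ≤ Q' := setIntegral_nonneg hAm fun y _ => hk0 _
    have hbern : 1 - 3 * n * (Λ * t) ≤ (1 - 3 * Λ * t) ^ n := by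
      have := one_add_mul_le_pow (a := -(3 * Λ * t)) (by linarith) n
      rw [← sub_eq_add_neg] at this
      linarith
    have h5 : (1 - 3 * n * (Λ * t)) * Q' ≤ m - g z :=
      (mul_le_mul_of_nonneg_right hbern hQ'0).trans hkle
    have h6 : (1 - 3 * n * (Λ * t)) * (Q - D) ≤ m - g z :=
      (mul_le_mul_of_nonneg_left (by linarith) (by linarith)).trans h5
    have h7 : 3 * n * (Λ * t) * Q ≤ 3 * n * (Λ * t) * (2 * ω) := by gcongr
    have h8 : 0 ≤ 3 * n * (Λ * t) * D := by positivity
    nlinarith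
  -- pass to the limit
  have hline : HasDerivAt (fun t : ℝ => g (x + t • Y x)) (fderiv ℝ g x (Y x)) 0 :=
    (hgd.hasFDerivAt.hasLineDerivAt (Y x))
  have hlim := hline.tendsto_slope_zero_right
  refine le_of_tendsto hlim ?_
  have e1 : ∀ᶠ t : ℝ in 𝓝[>] 0, 0 < t := eventually_mem_nhdsWithin
  have e2 : ∀ᶠ t : ℝ in 𝓝[>] 0, t ≤ τ :=
    nhdsWithin_le_nhds (eventually_le_nhds hτ)
  have e3 : ∀ᶠ t : ℝ in 𝓝[>] 0, 6 * (n + 1) * Λ * t ≤ 1 := by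
    apply nhdsWithin_le_nhds
    have : Tendsto (fun t : ℝ => 6 * (n + 1) * Λ * t) (𝓝 0) (𝓝 (6 * (n + 1) * Λ * 0)) :=
      (continuous_const.mul continuous_id).tendsto 0
    rw [mul_zero] at this
    exact this.eventually (eventually_le_nhds one_pos)
  have e4 : ∀ᶠ t : ℝ in 𝓝[>] 0, Mb * t ≤ δ := by
    apply nhdsWithin_le_nhds
    have : Tendsto (fun t : ℝ => Mb * t) (𝓝 0) (𝓝 (Mb * 0)) :=
      (continuous_const.mul continuous_id).tendsto 0
    rw [mul_zero] at this
    exact this.eventually (eventually_le_nhds hδ)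
  filter_upwards [e1, e2, e3, e4] with t h1 h2 h3 h4
  have := main t h1 h2 h3 h4
  simp only [zero_add, zero_smul, add_zero, smul_eq_mul]
  rw [inv_mul_eq_div, div_le_iff₀ h1]
  linarith

open MeasureTheory Measure Module in
lemma cc_moll_props {E : Type*} [NormedAddCommGroup E] [InnerProductSpace ℝ E]
    [FiniteDimensional ℝ E] [MeasurableSpace E] [BorelSpace E]
    (μ : Measure E) [μ.IsAddHaarMeasure] {F : E → ℝ} (hFi : Integrable F μ)
    {δ : ℝ} {φ : E → ℝ} (hφ : ContDiff ℝ (⊤ : ℕ∞) φ)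
    (hφ0 : ∀ z, 0 ≤ φ z) (hφs : ∀ z, δ ≤ ‖z‖ → φ z = 0)
    (hφ1 : ∫ z, φ z ∂μ = 1) {g : E → ℝ} (hg : ∀ z, g z = ∫ w, φ (z - w) * F w ∂μ) :
    ContDiff ℝ (⊤ : ℕ∞) g ∧
    (∀ z c ω, (∀ w, ‖w‖ < δ → |F (z - w) - c| ≤ ω) → |g z - c| ≤ ω) ∧
    (∀ x y D, (∀ w, ‖w‖ < δ → |F (x - w) - F (y - w)| ≤ D) → |g x - g y| ≤ D) := by
  have hcs : HasCompactSupport φ := by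
    refine HasCompactSupport.intro (isCompact_closedBall 0 δ) fun w hw => hφs w ?_
    rw [mem_closedBall, dist_zero_right] at hw
    exact (not_le.1 hw).le
  have hφc : Continuous φ := hφ.continuous
  have hφI : Integrable φ μ := hφc.integrable_of_hasCompactSupport hcs
  obtain ⟨B, hB⟩ := hcs.exists_bound_of_continuous hφc
  have hg2 : ∀ z, g z = ∫ w, φ w * F (z - w) ∂μ := by
    intro z
    rw [hg, ← integral_sub_left_eq_self (fun w => φ w * F (z - w)) μ z]
    simp
  have hI : ∀ z, Integrable (fun w => φ w * F (z - w)) μ := fun z =>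
    (hFi.comp_sub_left z).bdd_mul (c := B) (by fun_prop) (Eventually.of_forall fun w => hB _)
  have hgen : ∀ (u : E → ℝ) (D : ℝ), (∀ w, ‖w‖ < δ → |u w| ≤ D) → |∫ w, φ w * u w ∂μ| ≤ D := by
    intro u D hu
    rw [← Real.norm_eq_abs]
    calc ‖∫ w, φ w * u w ∂μ‖ ≤ ∫ w, φ w * D ∂μ := by
          apply norm_integral_le_of_norm_le (hφI.mul_const D)
          refine Eventually.of_forall fun w => ?_
          by_cases hw : δ ≤ ‖w‖
          · simp [hφs w hw]
          · rw [norm_mul, Real.norm_eq_abs, Real.norm_eq_abs, abs_of_nonneg (hφ0 w)]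
            exact mul_le_mul_of_nonneg_left (hu w (not_le.1 hw)) (hφ0 w)
      _ = D := by rw [integral_mul_const, hφ1, one_mul]
  refine ⟨?_, ?_, ?_⟩
  · have := hcs.contDiff_convolution_right (ContinuousLinearMap.mul ℝ ℝ) (μ := μ)
      hFi.locallyIntegrable hφ
    convert this using 1
    ext z
    rw [hg, convolution]
    simp [mul_comm]
  · intro z c ω h
    have : g z - c = ∫ w, φ w * (F (z - w) - c) ∂μ := by
      simp only [mul_sub]
      rw [integral_sub (hI z) (hφI.mul_const c), integral_mul_const, hφ1, one_mul, hg2]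
    rw [this]
    exact hgen _ _ h
  · intro x y D h
    have : g x - g y = ∫ w, φ w * (F (x - w) - F (y - w)) ∂μ := by
      simp only [mul_sub]
      rw [integral_sub (hI x) (hI y), hg2, hg2]
    rw [this]
    exact hgen _ _ h

lemma CCData.Admissible.continuousOn {d s : ℕ} {S : CCData d s} {b : ℝ} {γ : ℝ → Euc d}
    (h : S.Admissible b γ) : ContinuousOn γ (Icc 0 b) := by
  obtain ⟨hb, hG, c, hc, hc1, hi, hγ⟩ := h
  have : ContinuousOn (fun t => γ 0 + ∫ u in (0 : ℝ)..t, ∑ j, c j u • S.X j (γ u)) (Icc 0 b) := by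
    have h2 := intervalIntegral.continuousOn_primitive_interval (a := 0) (b := b)
      (μ := MeasureTheory.volume) (f := fun u => ∑ j, c j u • S.X j (γ u)) (by rwa [uIcc_of_le hb])
    rw [uIcc_of_le hb] at h2
    exact continuousOn_const.add h2
  exact this.congr hγ

lemma CCData.Admissible.restrict {d s : ℕ} {S : CCData d s} {b : ℝ} {γ : ℝ → Euc d}
    (h : S.Admissible b γ) {t : ℝ} (ht : t ∈ Icc 0 b) : S.Admissible t γ := by
  obtain ⟨hb, hG, c, hc, hc1, hi, hγ⟩ := h
  have hsub : Icc 0 t ⊆ Icc 0 b := Icc_subset_Icc le_rfl ht.2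
  exact ⟨ht.1, fun u hu => hG u (hsub hu), c, hc, fun u hu => hc1 u (hsub hu), hi.mono_set hsub,
    fun u hu => hγ u (hsub hu)⟩

lemma CCData.Admissible.ccDist_le {d s : ℕ} {S : CCData d s} {b : ℝ} {γ : ℝ → Euc d}
    (h : S.Admissible b γ) : S.ccDist (γ 0) (γ b) ≤ b :=
  csInf_le ⟨0, fun _ ⟨_, h, _⟩ => h.1⟩ ⟨γ, h, rfl, rfl⟩

lemma CCRepresentation.exists_curve {d s : ℕ} {S : CCData d s} {M : Type*} [MetricSpace M]
    {ι : M → Euc d} (hrep : CCRepresentation S M ι) (x y : M) {r : ℝ} (hr : dist x y < r) :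
    ∃ b γ, S.Admissible b γ ∧ γ 0 = ι x ∧ γ b = ι y ∧ b < r := by
  by_cases hxy : x = y
  · subst hxy
    rw [dist_self] at hr
    refine ⟨0, fun _ => ι x, ⟨le_rfl, fun t _ => ?_, fun _ _ => 0, fun _ => measurable_const, ?_, ?_,
      ?_⟩, rfl, rfl, hr⟩
    · rw [← hrep.range_eq]; exact mem_range_self x
    · intro t _; simp
    · simp
    · intro t _; simp
  · have hpos := dist_pos.2 hxy
    rw [hrep.dist_eq, CCData.ccDist] at hpos hr
    have hne : {b | ∃ γ : ℝ → Euc d, S.Admissible b γ ∧ γ 0 = ι x ∧ γ b = ι y}.Nonempty := by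
      by_contra hc
      rw [not_nonempty_iff_eq_empty] at hc
      rw [hc, Real.sInf_empty] at hpos
      exact lt_irrefl _ hpos
    obtain ⟨b, ⟨γ, h1, h2, h3⟩, hb⟩ := exists_lt_of_csInf_lt hne hr
    exact ⟨b, γ, h1, h2, h3, hb⟩

/-- Points that are `d_cc`-close to `x₀` are close in the Euclidean sense. -/
lemma CCRepresentation.mem_ball {d s : ℕ} {S : CCData d s} {M : Type*} [MetricSpace M]
    {ι : M → Euc d} (hrep : CCRepresentation S M ι) {x₀ : M} {R C₁ : ℝ} (hR : 0 < R)
    (hC : ∀ y ∈ closedBall (ι x₀) R ∩ S.G, C₁ * ‖ι x₀ - y‖ ≤ S.ccDist (ι x₀) y)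
    {y : M} (hy : dist x₀ y < C₁ * R) : ι y ∈ ball (ι x₀) R := by
  obtain ⟨b, γ, hγ, h0, h1, hb⟩ := hrep.exists_curve x₀ y hy
  by_contra hc
  rw [Metric.mem_ball, not_lt] at hc
  have hcont : ContinuousOn (fun t => dist (γ t) (ι x₀)) (Icc 0 b) :=
    (continuous_id.dist continuous_const).comp_continuousOn (CCData.Admissible.continuousOn hγ)
  have := intermediate_value_Icc hγ.1 hcont
  obtain ⟨t, ht, htR⟩ := this (show R ∈ Icc _ _ by
    simp only [h0, h1, dist_self]; exact ⟨hR.le, hc⟩)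
  simp only at htR
  have h2 := hC (γ t) ⟨by rw [mem_closedBall, htR], hγ.2.1 t ht⟩
  have h3 := (hγ.restrict ht).ccDist_le
  rw [h0] at h3
  rw [← dist_eq_norm, dist_comm, htR] at h2
  linarith [ht.2]

/-- Integral curves of a horizontal field are admissible. -/
lemma CCData.admissible_of_flow {d s : ℕ} {S : CCData d s} {B : Set (Euc d)} (hB : B ⊆ S.G)
    (hX : ∀ j, ContinuousOn (S.X j) B) {c : Fin s → ℝ} (hc : ∑ j, c j ^ 2 ≤ 1)
    {τ : ℝ} (hτ : 0 ≤ τ) {γ : ℝ → Euc d}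
    (hγ : ∀ t ∈ Icc 0 τ, γ t ∈ B ∧
      HasDerivWithinAt γ (∑ j, c j • S.X j (γ t)) (Icc 0 τ) t) : S.Admissible τ γ := by
  have hγc : ContinuousOn γ (Icc 0 τ) := fun t ht => (hγ t ht).2.continuousWithinAt
  have hvc : ContinuousOn (fun t => ∑ j, c j • S.X j (γ t)) (Icc 0 τ) :=
    continuousOn_finsetSum _ fun j _ => ((hX j).comp hγc fun t ht => (hγ t ht).1).const_smul (c j)
  refine ⟨hτ, fun t ht => hB (hγ t ht).1, fun j _ => c j, fun _ => measurable_const, fun _ _ => hc,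
    hvc.integrableOn_compact isCompact_Icc, fun t ht => ?_⟩
  have hsub : Icc 0 t ⊆ Icc 0 τ := Icc_subset_Icc le_rfl ht.2
  have := intervalIntegral.integral_eq_sub_of_hasDerivAt_of_le ht.1 (hγc.mono hsub)
    (f' := fun t => ∑ j, c j • S.X j (γ t))
    (fun u hu => (hγ u (hsub (Ioo_subset_Icc_self hu))).2.hasDerivAt
      (Icc_mem_nhds hu.1 (hu.2.trans_le ht.2)))
    ((hvc.mono hsub).intervalIntegrable_of_Icc ht.1)
  rw [this]; abel

/-- A function with horizontal gradient bounded by `L` is `L`-Lipschitz along admissible curves. -/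
lemma CCData.Admissible.sub_le {d s : ℕ} {S : CCData d s} {b : ℝ} {γ : ℝ → Euc d}
    (h : S.Admissible b γ) {U : Set (Euc d)} (hγU : ∀ t ∈ Icc 0 b, γ t ∈ U)
    (hX : ∀ j, ContinuousOn (S.X j) U) {g : Euc d → ℝ} (hg : Differentiable ℝ g) {L : ℝ}
    (hL : ∀ x ∈ U, Real.sqrt (∑ j, (fderiv ℝ g x (S.X j x)) ^ 2) ≤ L) :
    g (γ b) - g (γ 0) ≤ L * b := by
  have hγc := h.continuousOn
  obtain ⟨hb, hG, c, hc, hc1, hi, hγ⟩ := h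
  have hXγ : ∀ j, ContinuousOn (fun t => S.X j (γ t)) (Icc 0 b) := fun j =>
    (hX j).comp hγc hγU
  have key := image_le_of_liminf_slope_right_le_deriv_boundary (f := fun t => g (γ t))
    (a := 0) (b := b) (B := fun t => g (γ 0) + L * t) (B' := fun _ => L)
    (hg.continuous.comp_continuousOn hγc) (by simp) (by fun_prop)
    (fun x _ => by
      simpa using ((hasDerivWithinAt_id x (Ici x)).const_mul L).const_add (g (γ 0))) ?_
  · have : g (γ b) ≤ g (γ 0) + L * b := key ⟨hb, le_rfl⟩
    linarith
  intro x hx r hr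
  apply Eventually.frequently
  have hx' : x ∈ Icc 0 b := Ico_subset_Icc_self hx
  set l := fderiv ℝ g (γ x) with hl
  set η := (r - L) / 3 with hη
  have hη0 : 0 < η := by rw [hη]; linarith
  set B := ∑ j, ‖S.X j (γ x)‖ + 1 with hB
  have hB0 : 0 < B := by positivity
  -- right neighbourhoods
  have hIcc : Icc 0 b ∈ 𝓝[≥] x := Icc_mem_nhdsGE_of_mem hx
  have hcw : ∀ {H : ℝ → ℝ}, ContinuousOn H (Icc 0 b) → ∀ v, H x < v → ∀ᶠ u in 𝓝[≥] x, H u ≤ v := by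
    intro H hH v hv
    have := (hH x hx').mono_of_mem_nhdsWithin hIcc
    exact (this.eventually (eventually_le_nhds hv))
  have ev1 : ∀ᶠ u in 𝓝[≥] x, ∑ j, ‖S.X j (γ u)‖ ≤ B :=
    hcw (continuousOn_finsetSum _ fun j _ => (hXγ j).norm) B (by rw [hB]; linarith)
  have ev2 : ∀ᶠ u in 𝓝[≥] x, Real.sqrt (∑ j, (l (S.X j (γ u))) ^ 2) ≤ L + η := by
    have hHc : ContinuousOn (fun u => Real.sqrt (∑ j, (l (S.X j (γ u))) ^ 2)) (Icc 0 b) :=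
      ContinuousOn.sqrt (continuousOn_finsetSum _ fun j _ =>
        (l.continuous.comp_continuousOn (hXγ j)).pow 2)
    refine hcw hHc _ ?_
    show Real.sqrt (∑ j, (l (S.X j (γ x))) ^ 2) < L + η
    have := hL (γ x) (hγU x hx')
    linarith
  have ev3 : ∀ᶠ u in 𝓝[≥] x, |g (γ u) - g (γ x) - l (γ u - γ x)| ≤ η / B * ‖γ u - γ x‖ := by
    have h1 := (hg (γ x)).hasFDerivAt.isLittleO.def (c := η / B) (by positivity)
    have h2 : Tendsto γ (𝓝[≥] x) (𝓝 (γ x)) := (hγc x hx').mono_of_mem_nhdsWithin hIcc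
    have := h2.eventually h1
    simpa [Real.norm_eq_abs] using this
  have ev := (((ev1.and ev2).and ev3).and hIcc)
  obtain ⟨e, he, hsub⟩ := mem_nhdsGE_iff_exists_Ico_subset.1 ev
  have hev : ∀ᶠ z in 𝓝[>] x, z ∈ Ioo x e := Ioo_mem_nhdsGT he
  filter_upwards [hev] with z hz
  have hzx : 0 < z - x := sub_pos.2 hz.1
  have hall : ∀ u ∈ Icc x z, (∑ j, ‖S.X j (γ u)‖ ≤ B ∧
      Real.sqrt (∑ j, (l (S.X j (γ u))) ^ 2) ≤ L + η) ∧ u ∈ Icc 0 b := by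
    intro u hu
    have := hsub (show u ∈ Ico x e from ⟨hu.1, hu.2.trans_lt hz.2⟩)
    exact ⟨this.1.1, this.2⟩
  have hzb : z ∈ Icc 0 b := (hall z ⟨hz.1.le, le_rfl⟩).2
  set v : ℝ → Euc d := fun u => ∑ j, c j u • S.X j (γ u) with hv
  have hint : IntervalIntegrable v MeasureTheory.volume x z := by
    exact (intervalIntegrable_iff_integrableOn_Icc_of_le hz.1.le).2
      (hi.mono_set (Icc_subset_Icc hx'.1 hzb.2))
  have hint0 : ∀ u ∈ Icc 0 b, IntervalIntegrable v MeasureTheory.volume 0 u := by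
    intro u hu
    exact (intervalIntegrable_iff_integrableOn_Icc_of_le hu.1).2
      (hi.mono_set (Icc_subset_Icc le_rfl hu.2))
  have hdiff : γ z - γ x = ∫ u in x..z, v u := by
    rw [hγ z hzb, hγ x hx', add_sub_add_left_eq_sub,
      intervalIntegral.integral_interval_sub_left (hint0 z hzb) (hint0 x hx')]
  have hcj : ∀ u ∈ Icc 0 b, ∀ j, |c j u| ≤ 1 := by
    intro u hu j
    rw [← sq_le_one_iff_abs_le_one]
    refine le_trans ?_ (hc1 u hu)
    exact Finset.single_le_sum (f := fun j => c j u ^ 2) (fun i _ => sq_nonneg _) (Finset.mem_univ j)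
  have hn : ‖γ z - γ x‖ ≤ B * (z - x) := by
    rw [hdiff, ← abs_of_pos hzx]
    apply intervalIntegral.norm_integral_le_of_norm_le_const
    intro u hu
    rw [uIoc_of_le hz.1.le] at hu
    have hu' := hall u (Ioc_subset_Icc_self hu)
    refine (norm_sum_le _ _).trans (le_trans (Finset.sum_le_sum fun j _ => ?_) hu'.1.1)
    rw [norm_smul, Real.norm_eq_abs]
    exact mul_le_of_le_one_left (norm_nonneg _) (hcj u hu'.2 j)
  have hlv : |l (γ z - γ x)| ≤ (L + η) * (z - x) := by
    rw [hdiff, ← ContinuousLinearMap.intervalIntegral_comp_comm _ hint, ← Real.norm_eq_abs]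
    have := intervalIntegral.norm_integral_le_of_norm_le_const (a := x) (b := z) (C := L + η)
      (f := fun u => l (v u)) ?_
    · rwa [abs_of_pos hzx] at this
    intro u hu
    rw [uIoc_of_le hz.1.le] at hu
    have hu' := hall u (Ioc_subset_Icc_self hu)
    refine le_trans ?_ hu'.1.2
    simp only [hv, map_sum, map_smul, smul_eq_mul, Real.norm_eq_abs]
    apply Real.abs_le_sqrt
    refine (Finset.sum_mul_sq_le_sq_mul_sq _ _ _).trans ?_
    exact mul_le_of_le_one_left (Finset.sum_nonneg fun _ _ => sq_nonneg _) (hc1 u hu'.2)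
  have h3 := (hsub (show z ∈ Ico x e from ⟨hz.1.le, hz.2⟩)).1.2
  have h4 : η / B * ‖γ z - γ x‖ ≤ η * (z - x) := by
    calc η / B * ‖γ z - γ x‖ ≤ η / B * (B * (z - x)) := by gcongr
      _ = η * (z - x) := by field_simp
  rw [slope_def_field, div_lt_iff₀ hzx]
  have h5 := le_abs_self (g (γ z) - g (γ x) - l (γ z - γ x))
  have h6 := le_abs_self (l (γ z - γ x))
  have h7 : r = L + 3 * η := by rw [hη]; ring
  rw [h7]
  nlinarith [mul_pos hη0 hzx]

open MeasureTheory Measure Module in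
/-- The Euclidean core of the approximation statement. -/
lemma CCData.local_approx {d s : ℕ} (S : CCData d s) {p : Euc d} {R : ℝ} (hR : 0 < R)
    (hBG : closedBall p (3 * R) ⊆ S.G) {Kj : Fin s → NNReal}
    (hX : ∀ j, LipschitzOnWith (Kj j) (S.X j) (closedBall p (3 * R)))
    {α : ℝ} (hα : 0 < α) {C₂ : ℝ} (hC₂ : 0 < C₂)
    (hcc : ∀ x ∈ closedBall p (3 * R), ∀ y ∈ closedBall p (3 * R),
      S.ccDist x y ≤ C₂ * ‖x - y‖ ^ α)
    (F₀ : Euc d → ℝ) (L : NNReal)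
    (hF : ∀ x ∈ closedBall p (3 * R), ∀ y ∈ closedBall p (3 * R),
      |F₀ x - F₀ y| ≤ L * S.ccDist x y) {ε : ℝ} (hε : 0 < ε) :
    ∃ g : Euc d → ℝ, ContDiff ℝ (⊤ : ℕ∞) g ∧ (∀ x ∈ ball p R, |F₀ x - g x| < ε) ∧
      (∀ x ∈ ball p R, Real.sqrt (∑ j, (fderiv ℝ g x (S.X j x)) ^ 2) ≤ L) ∧
      g p = F₀ p ∧
      (∀ x ∈ ball p R, ∀ y ∈ ball p R, |g x - g y| ≤ L * C₂ * ‖x - y‖ ^ α) := by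
  classical
  set B := closedBall p (3 * R) with hBdef
  have hXc : ∀ j, ContinuousOn (S.X j) B := fun j => (hX j).continuousOn
  have hBc : IsCompact B := isCompact_closedBall _ _
  have hbd : ∀ j, ∃ m, ∀ x ∈ B, ‖S.X j x‖ ≤ m := fun j => hBc.exists_bound_of_continuousOn (hXc j)
  choose m hm using hbd
  have hpB : p ∈ B := mem_closedBall_self (by positivity)
  have hm0 : ∀ j, 0 ≤ m j := fun j => (norm_nonneg _).trans (hm j p hpB)
  set Λ : NNReal := ∑ j, Kj j with hΛ
  set Mb : NNReal := ⟨∑ j, m j, Finset.sum_nonneg fun j _ => hm0 j⟩ with hMb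
  set μ : Measure (Euc d) := μH[finrank ℝ (Euc d)] with hμ
  obtain ⟨C, hC0, hmol⟩ := cc_mollifier μ
  set Cst : ℝ := 4 * Λ * C + 6 * (finrank ℝ (Euc d)) * Λ with hCst
  have hCst0 : 0 ≤ Cst := by positivity
  -- the truncated function
  have hFH : ∀ x ∈ B, ∀ y ∈ B, |F₀ x - F₀ y| ≤ L * C₂ * ‖x - y‖ ^ α := by
    intro x hx y hy
    rw [mul_assoc]
    exact (hF x hx y hy).trans (mul_le_mul_of_nonneg_left (hcc x hx y hy) L.2)
  set F : Euc d → ℝ := B.indicator F₀ with hFdef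
  have hFB : ∀ x ∈ B, F x = F₀ x := fun x hx => indicator_of_mem hx _
  have hF₀c : ContinuousOn F₀ B := by
    intro x hx
    rw [ContinuousWithinAt, tendsto_iff_dist_tendsto_zero]
    have ht : Tendsto (fun y => L * C₂ * ‖y - x‖ ^ α) (𝓝[B] x) (𝓝 0) := by
      have hc : Continuous fun y : Euc d => L * C₂ * ‖y - x‖ ^ α :=
        continuous_const.mul ((continuous_id.sub continuous_const).norm.rpow_const
          fun _ => Or.inr hα.le)
      have := (hc.tendsto x).mono_left (nhdsWithin_le_nhds (s := B))
      simpa [Real.zero_rpow hα.ne'] using this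
    refine squeeze_zero' (Eventually.of_forall fun _ => dist_nonneg) ?_ ht
    filter_upwards [self_mem_nhdsWithin] with y hy
    rw [Real.dist_eq]
    exact hFH y hy x hx
  have hFc : ContinuousOn F B := hF₀c.congr hFB
  have hFi : Integrable F μ :=
    (integrable_indicator_iff hBc.measurableSet).2 (hF₀c.integrableOn_compact hBc)
  -- choice of the mollification parameter
  set A : ℝ := 2 * L * C₂ + C₂ * Cst * (L * C₂ * R ^ α) with hA
  obtain ⟨δ, hδ, hδR, hδA⟩ : ∃ δ > 0, 2 * δ ≤ R ∧ (2 * δ) ^ α * A < ε := by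
    have hc : Continuous fun δ : ℝ => (2 * δ) ^ α * A :=
      ((continuous_const.mul continuous_id).rpow_const fun _ => Or.inr hα.le).mul continuous_const
    have h1 : ∀ᶠ δ in 𝓝[>] (0 : ℝ), (2 * δ) ^ α * A < ε := by
      have := (hc.tendsto 0).mono_left (nhdsWithin_le_nhds (s := Ioi 0))
      simp only [mul_zero, Real.zero_rpow hα.ne', zero_mul] at this
      exact this.eventually (gt_mem_nhds hε)
    have h2 : ∀ᶠ δ in 𝓝[>] (0 : ℝ), δ ∈ Ioo 0 (R / 2) := Ioo_mem_nhdsGT (by positivity)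
    obtain ⟨δ, h3, h4⟩ := (h1.and h2).exists
    exact ⟨δ, h4.1, by linarith [h4.2], h3⟩
  set q : ℝ := (2 * δ) ^ α with hq
  have hq0 : 0 ≤ q := by positivity
  obtain ⟨φ, l, hφ, hφ0, hφs, hφ1, hφl, hφC⟩ := hmol δ hδ
  set g₀ : Euc d → ℝ := fun z => ∫ w, φ (z - w) * F w ∂μ with hg₀
  obtain ⟨hsm, hval, hosc⟩ := cc_moll_props μ hFi hφ hφ0 hφs hφ1 (g := g₀) (fun z => rfl)
  have hgd : Differentiable ℝ g₀ := hsm.differentiable (by simp)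
  set ω : ℝ := L * C₂ * q with hω
  set κ : ℝ := C₂ * q * Cst with hκ
  have hκ0 : 0 ≤ κ := by positivity
  have hin : ∀ x ∈ ball p R, ∀ y, ‖y - x‖ ≤ 2 * δ → y ∈ B := by
    intro x hx y hy
    rw [Metric.mem_ball] at hx
    rw [hBdef, mem_closedBall]
    have := dist_triangle y x p
    rw [dist_eq_norm y x] at this
    linarith
  have hωx : ∀ x ∈ ball p R, ∀ y, ‖y - x‖ ≤ 2 * δ → |F y - F x| ≤ ω := by
    intro x hx y hy
    have hxB : x ∈ B := hin x hx x (by simp; positivity)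
    have hyB := hin x hx y hy
    rw [hFB x hxB, hFB y hyB]
    refine (hFH y hyB x hxB).trans ?_
    rw [hω, hq]
    gcongr
  have hpR : p ∈ ball p R := mem_ball_self hR
  have hclose : ∀ x ∈ ball p R, |g₀ x - F₀ x| ≤ ω := by
    intro x hx
    have hxB : x ∈ B := hin x hx x (by simp; positivity)
    rw [← hFB x hxB]
    refine hval x (F x) ω fun w hw => hωx x hx _ ?_
    rw [sub_sub_cancel_left, norm_neg]
    linarith
  have hhol : ∀ x ∈ ball p R, ∀ y ∈ ball p R, |g₀ x - g₀ y| ≤ L * C₂ * ‖x - y‖ ^ α := by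
    intro x hx y hy
    refine hosc x y _ fun w hw => ?_
    have h1 : x - w ∈ B := hin x hx _ (by rw [sub_sub_cancel_left, norm_neg]; linarith)
    have h2 : y - w ∈ B := hin y hy _ (by rw [sub_sub_cancel_left, norm_neg]; linarith)
    rw [hFB _ h1, hFB _ h2]
    have := hFH _ h1 _ h2
    rwa [sub_sub_sub_cancel_right] at this
  -- the directional derivatives
  have hdir : ∀ x ∈ ball p R, ∀ c : Fin s → ℝ, ∑ j, c j ^ 2 ≤ 1 →
      fderiv ℝ g₀ x (∑ j, c j • S.X j x) ≤ L * (1 + κ) := by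
    intro x hx c hc
    have hcj : ∀ j, |c j| ≤ 1 := by
      intro j
      rw [← sq_le_one_iff_abs_le_one]
      refine le_trans ?_ hc
      exact Finset.single_le_sum (f := fun j => c j ^ 2) (fun i _ => sq_nonneg _)
        (Finset.mem_univ j)
    have hYL : LipschitzOnWith Λ (fun x => ∑ j, c j • S.X j x) B := by
      refine LipschitzOnWith.of_dist_le_mul fun u hu v hv => ?_
      rw [dist_eq_norm, ← Finset.sum_sub_distrib, hΛ, NNReal.coe_sum, Finset.sum_mul]
      refine (norm_sum_le _ _).trans (Finset.sum_le_sum fun j _ => ?_)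
      rw [← smul_sub, norm_smul, Real.norm_eq_abs, ← dist_eq_norm]
      exact (mul_le_of_le_one_left dist_nonneg (hcj j)).trans ((hX j).dist_le_mul u hu v hv)
    have hYM : ∀ u ∈ B, ‖∑ j, c j • S.X j u‖ ≤ Mb := by
      intro u hu
      refine (norm_sum_le _ _).trans (Finset.sum_le_sum fun j _ => ?_)
      rw [norm_smul, Real.norm_eq_abs]
      exact (mul_le_of_le_one_left (norm_nonneg _) (hcj j)).trans (hm j u hu)
    have hfl : ∀ τ ≥ (0 : ℝ), ∀ γ : ℝ → Euc d, (∀ t ∈ Icc 0 τ, γ t ∈ B ∧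
        HasDerivWithinAt γ ((fun x => ∑ j, c j • S.X j x) (γ t)) (Icc 0 τ) t) →
        F (γ τ) - F (γ 0) ≤ L * τ := by
      intro τ hτ γ hγ
      have h1 : γ τ ∈ B := (hγ τ ⟨hτ, le_rfl⟩).1
      have h0 : γ 0 ∈ B := (hγ 0 ⟨le_rfl, hτ⟩).1
      have had : S.Admissible τ γ := CCData.admissible_of_flow hBG hXc hc hτ hγ
      rw [hFB _ h1, hFB _ h0]
      have h2 := hF _ h0 _ h1
      rw [abs_sub_comm] at h2
      exact (le_abs_self _).trans (h2.trans
        (mul_le_mul_of_nonneg_left (CCData.Admissible.ccDist_le had) L.2))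
    have := cc_key hR hYL hYM hFi hFc hfl hδ hδR hφ0 hφs hφ1 hφl hφC hx (ω := ω)
      (fun y hy => hωx x hx y (by rwa [mem_closedBall, dist_eq_norm] at hy))
      (g := g₀) (fun z => rfl) (hgd x)
    refine this.trans (le_of_eq ?_)
    rw [hω, hκ, hCst]
    ring
  have hgrad : ∀ x ∈ ball p R, Real.sqrt (∑ j, (fderiv ℝ g₀ x (S.X j x)) ^ 2) ≤ L * (1 + κ) := by
    intro x hx
    set a : Fin s → ℝ := fun j => fderiv ℝ g₀ x (S.X j x) with ha
    set N : ℝ := Real.sqrt (∑ j, a j ^ 2) with hN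
    have hsum0 : 0 ≤ ∑ j, a j ^ 2 := Finset.sum_nonneg fun _ _ => sq_nonneg _
    have hN2 : N ^ 2 = ∑ j, a j ^ 2 := Real.sq_sqrt hsum0
    show N ≤ _
    rcases (Real.sqrt_nonneg (∑ j, a j ^ 2)).eq_or_lt with h0 | h0
    · rw [← hN] at h0
      rw [← h0]; positivity
    · rw [← hN] at h0
      have := hdir x hx (fun j => a j / N) (by
        simp only [div_pow]
        rw [← Finset.sum_div, ← hN2, div_self (by positivity)])
      refine le_trans (le_of_eq ?_) this
      simp only [_root_.map_sum, _root_.map_smul, smul_eq_mul]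
      have : ∀ j, a j / N * fderiv ℝ g₀ x (S.X j x) = a j ^ 2 / N := fun j => by
        rw [ha]; ring
      simp only [this]
      rw [← Finset.sum_div, ← hN2]
      field_simp
  -- normalization
  have h1κ : 0 < 1 + κ := by linarith
  have hinv1 : (1 + κ)⁻¹ ≤ 1 := inv_le_one_of_one_le₀ (by linarith)
  have hinv0 : 0 < (1 + κ)⁻¹ := by positivity
  refine ⟨fun z => (1 + κ)⁻¹ * (g₀ z - g₀ p) + F₀ p, ?_, ?_, ?_, by simp, ?_⟩
  · exact (contDiff_const.mul (hsm.sub contDiff_const)).add contDiff_const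
  · intro x hx
    have e1 := hclose x hx
    have e2 := hclose p hpR
    have e3 : |g₀ x - g₀ p| ≤ L * C₂ * R ^ α := by
      refine (hhol x hx p hpR).trans ?_
      rw [Metric.mem_ball, dist_eq_norm] at hx
      gcongr
    have e4 : F₀ x - ((1 + κ)⁻¹ * (g₀ x - g₀ p) + F₀ p) =
        -(g₀ x - F₀ x) + (g₀ p - F₀ p) + κ * (1 + κ)⁻¹ * (g₀ x - g₀ p) := by
      field_simp
      ring
    have e5 : |κ * (1 + κ)⁻¹ * (g₀ x - g₀ p)| ≤ κ * (L * C₂ * R ^ α) := by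
      rw [abs_mul, abs_of_nonneg (by positivity : 0 ≤ κ * (1 + κ)⁻¹)]
      have : κ * (1 + κ)⁻¹ ≤ κ := mul_le_of_le_one_right hκ0 hinv1
      gcongr
    show |F₀ x - ((1 + κ)⁻¹ * (g₀ x - g₀ p) + F₀ p)| < ε
    rw [e4]
    refine lt_of_le_of_lt ((abs_add_le _ _).trans (add_le_add (abs_add_le _ _) e5)) ?_
    rw [abs_neg]
    refine lt_of_le_of_lt (add_le_add_left (add_le_add e1 e2) _) (lt_of_eq_of_lt ?_ hδA)
    rw [hω, hκ, hA]
    ring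
  · intro x hx
    have hfd : fderiv ℝ (fun z => (1 + κ)⁻¹ * (g₀ z - g₀ p) + F₀ p) x =
        (1 + κ)⁻¹ • fderiv ℝ g₀ x := by
      have h := (((hgd x).hasFDerivAt.sub_const (g₀ p)).const_mul (1 + κ)⁻¹).add_const (F₀ p)
      exact h.fderiv
    rw [hfd]
    have : ∑ j, (((1 + κ)⁻¹ • fderiv ℝ g₀ x) (S.X j x)) ^ 2 =
        ((1 + κ)⁻¹) ^ 2 * ∑ j, (fderiv ℝ g₀ x (S.X j x)) ^ 2 := by
      rw [Finset.mul_sum]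
      refine Finset.sum_congr rfl fun j _ => ?_
      simp [mul_pow]
    rw [this, Real.sqrt_mul (by positivity), Real.sqrt_sq hinv0.le]
    calc (1 + κ)⁻¹ * Real.sqrt (∑ j, (fderiv ℝ g₀ x (S.X j x)) ^ 2)
        ≤ (1 + κ)⁻¹ * (L * (1 + κ)) := mul_le_mul_of_nonneg_left (hgrad x hx) hinv0.le
      _ = L := by field_simp
  · intro x hx y hy
    show |((1 + κ)⁻¹ * (g₀ x - g₀ p) + F₀ p) - ((1 + κ)⁻¹ * (g₀ y - g₀ p) + F₀ p)| ≤ _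
    have : ((1 + κ)⁻¹ * (g₀ x - g₀ p) + F₀ p) - ((1 + κ)⁻¹ * (g₀ y - g₀ p) + F₀ p) =
        (1 + κ)⁻¹ * (g₀ x - g₀ y) := by ring
    rw [this, abs_mul, abs_of_pos hinv0]
    exact (mul_le_of_le_one_left (abs_nonneg _) hinv1).trans (hhol x hx y hy)

/-- **Smooth approximation of Lipschitz functions on Carnot–Carathéodory spaces
satisfying (◇).**  Let `(G, d_cc)` be a Carnot–Carathéodory metric space satisfying
condition (◇) with exponent `α` (realized as the pointed metric space `M` via `ι`), and
let `x₀ ∈ G`.  Then there are a compact neighborhood `K` of `x₀`, an open connected set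
`Ω ⊆ G` containing `Γ_K`, and a constant `β > 0` such that for every `L`-Lipschitz
function `f : G → ℝ` and every `ε > 0` there exists `g : Ω → ℝ` with:
(i) `g` is `C^∞` on `Ω`; (ii) `sup_{Γ_K} |f − g| < ε`;
(iii) `‖X(g)(x)‖_{ℓ₂^s} ≤ L` on `Γ_K`; (iv) `g(x₀) = f(x₀)`;
(v) `|g(x) − g(y)| ≤ L·β·‖x − y‖₂^α` for distinct `x, y ∈ Γ_K`.
In particular, `g|_K` is `d_cc`-Lipschitz with constant at most `L`. -/
theorem ccSpace_smooth_approximation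
    {d s : ℕ} (S : CCData d s)
    {M : Type*} [MetricSpace M] (ι : M → Euc d) (hrep : CCRepresentation S M ι)
    (α : ℝ) (hα : α ∈ Set.Ioo (0 : ℝ) 1) (hdia : S.Diamond α)
    (x₀ : M) :
    ∃ K : Set M, IsCompact K ∧ K ∈ 𝓝 x₀ ∧
    ∃ Ω : Set (Euc d), IsOpen Ω ∧ IsConnected Ω ∧ Ω ⊆ S.G ∧
      ι '' geodesicHull K ⊆ Ω ∧
    ∃ β > (0 : ℝ),
      ∀ (f : M → ℝ) (L : NNReal), LipschitzWith L f → ∀ ε > (0 : ℝ),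
        ∃ g : Euc d → ℝ,
          ContDiffOn ℝ (⊤ : ℕ∞) g Ω ∧
          (∀ x ∈ geodesicHull K, |f x - g (ι x)| < ε) ∧
          (∀ x ∈ geodesicHull K,
            Real.sqrt (∑ j, (fderiv ℝ g (ι x) (S.X j (ι x))) ^ 2) ≤ L) ∧
          g (ι x₀) = f x₀ ∧
          (∀ x ∈ geodesicHull K, ∀ y ∈ geodesicHull K, x ≠ y →
            |g (ι x) - g (ι y)| ≤ (L : ℝ) * β * ‖ι x - ι y‖ ^ α) ∧
          LipschitzOnWith L (fun x : M => g (ι x)) K := by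
  classical
  obtain ⟨hα0, hα1⟩ := hα
  have hp0 : ι x₀ ∈ S.G := by rw [← hrep.range_eq]; exact mem_range_self x₀
  -- a small Euclidean ball
  choose U hU Kj hKj using fun j => S.locallyLipschitz_X j (ι x₀) hp0
  obtain ⟨ρ, hρ, hρs⟩ : ∃ ρ > 0, closedBall (ι x₀) ρ ⊆ S.G ∩ ⋂ j, U j := by
    have : S.G ∩ ⋂ j, U j ∈ 𝓝 (ι x₀) :=
      Filter.inter_mem (S.isOpen_G.mem_nhds hp0) (Filter.iInter_mem.2 hU)
    exact Metric.nhds_basis_closedBall.mem_iff.1 this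
  set R : ℝ := ρ / 3 with hRdef
  have hR : 0 < R := by positivity
  have h3R : 3 * R = ρ := by rw [hRdef]; ring
  rw [← h3R] at hρs
  set B := closedBall (ι x₀) (3 * R) with hB
  have hBG : B ⊆ S.G := fun x hx => (hρs hx).1
  have hXL : ∀ j, LipschitzOnWith (Kj j) (S.X j) B := fun j =>
    (hKj j).mono fun x hx => mem_iInter.1 (hρs hx).2 j
  obtain ⟨C₁, hC₁, C₂, hC₂, hC⟩ := hdia B hBG isBounded_closedBall
  have hΩB : ball (ι x₀) R ⊆ B := (ball_subset_closedBall).trans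
    (closedBall_subset_closedBall (by linarith))
  have hpB : ι x₀ ∈ B := mem_closedBall_self (by positivity)
  have hmem : ∀ y : M, dist x₀ y < C₁ * R → ι y ∈ ball (ι x₀) R := by
    intro y hy
    refine hrep.mem_ball hR (fun z hz => (hC _ hpB z ?_).1) hy
    exact closedBall_subset_closedBall (by linarith) hz.1
  set r : ℝ := C₁ * R / 8 with hr
  have hCR : 0 < C₁ * R := by positivity
  have hr0 : 0 < r := by positivity
  -- the inverse of `ι`
  haveI : Nonempty M := ⟨x₀⟩
  set κ : Euc d → M := Function.invFun ι with hκ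
  have hκι : ∀ y, κ (ι y) = y := Function.leftInverse_invFun hrep.injective
  have hικ : ∀ u ∈ S.G, ι (κ u) = u := by
    intro u hu
    rw [← hrep.range_eq] at hu
    exact Function.invFun_eq hu
  have hκd : ∀ u ∈ B, ∀ v ∈ B, dist (κ u) (κ v) = S.ccDist u v := by
    intro u hu v hv
    rw [hrep.dist_eq, hικ u (hBG hu), hικ v (hBG hv)]
  have hκc : ContinuousOn κ B := by
    intro x hx
    rw [ContinuousWithinAt, tendsto_iff_dist_tendsto_zero]
    have ht : Tendsto (fun y => C₂ * ‖y - x‖ ^ α) (𝓝[B] x) (𝓝 0) := by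
      have hc : Continuous fun y : Euc d => C₂ * ‖y - x‖ ^ α :=
        continuous_const.mul ((continuous_id.sub continuous_const).norm.rpow_const
          fun _ => Or.inr hα0.le)
      have := (hc.tendsto x).mono_left (nhdsWithin_le_nhds (s := B))
      simpa [Real.zero_rpow hα0.ne'] using this
    refine squeeze_zero' (Eventually.of_forall fun _ => dist_nonneg) ?_ ht
    filter_upwards [self_mem_nhdsWithin] with y hy
    rw [hκd y hy x hx]
    exact (hC y hy x hx).2
  have hKc : IsCompact (closedBall x₀ r) := by
    refine ((isCompact_closedBall (ι x₀) (3 * R)).image_of_continuousOn hκc).of_isClosed_subset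
      isClosed_closedBall fun y hy => ?_
    rw [mem_closedBall, dist_comm] at hy
    exact ⟨ι y, hΩB (hmem y (by linarith)), hκι y⟩
  have hhull : geodesicHull (closedBall x₀ r) ⊆ closedBall x₀ (3 * r) := by
    refine closure_minimal ?_ isClosed_closedBall
    intro z hz
    simp only [mem_iUnion] at hz
    obtain ⟨p, hp, q, hq, -, γ, ⟨h0, -, hiso⟩, t, ht, rfl⟩ := hz
    have h1 := hiso t ht 0 ⟨le_rfl, dist_nonneg⟩
    rw [h0, sub_zero, abs_of_nonneg ht.1] at h1
    rw [mem_closedBall] at hp hq ⊢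
    have h2 := dist_triangle (γ t) p x₀
    have h3 := dist_triangle_right p q x₀
    linarith [ht.2]
  have hhΩ : ∀ y ∈ geodesicHull (closedBall x₀ r), ι y ∈ ball (ι x₀) R := by
    intro y hy
    have := hhull hy
    rw [mem_closedBall, dist_comm] at this
    exact hmem y (by linarith)
  refine ⟨closedBall x₀ r, hKc, closedBall_mem_nhds x₀ hr0, ball (ι x₀) R, isOpen_ball,
    ⟨⟨ι x₀, mem_ball_self hR⟩, (convex_ball _ _).isPreconnected⟩, hΩB.trans hBG, ?_, C₂, hC₂, ?_⟩
  · rintro _ ⟨y, hy, rfl⟩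
    exact hhΩ y hy
  intro f L hf ε hε
  obtain ⟨g, hgs, hgε, hgL, hg0, hgH⟩ := S.local_approx hR hBG hXL hα0 hC₂
    (fun x hx y hy => (hC x hx y hy).2) (fun u => f (κ u)) L (by
      intro x hx y hy
      rw [← hκd x hx y hy, ← Real.dist_eq]
      exact hf.dist_le_mul _ _) hε
  refine ⟨g, hgs.contDiffOn, ?_, fun x hx => hgL _ (hhΩ x hx), by rw [hg0, hκι], ?_, ?_⟩
  · intro x hx
    have := hgε _ (hhΩ x hx)
    rwa [hκι] at this
  · intro x hx y hy _
    exact hgH _ (hhΩ x hx) _ (hhΩ y hy)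
  -- Lipschitz estimate on the ball
  have hgd : Differentiable ℝ g := hgs.differentiable (by simp)
  have hone : ∀ p ∈ closedBall x₀ r, ∀ q ∈ closedBall x₀ r,
      g (ι q) - g (ι p) ≤ L * dist p q := by
    intro p hp q hq
    have hη : ∀ η, 0 < η → η ≤ r → g (ι q) - g (ι p) ≤ L * (dist p q + η) := by
      intro η hη hηr
      obtain ⟨b, γ, hγ, h0, h1, hb⟩ := hrep.exists_curve p q
        (show dist p q < dist p q + η by linarith)
      have hγΩ : ∀ t ∈ Icc 0 b, γ t ∈ ball (ι x₀) R := by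
        intro t ht
        have hG := hγ.2.1 t ht
        rw [← hικ _ hG]
        apply hmem
        have e1 : dist p (κ (γ t)) ≤ t := by
          rw [hrep.dist_eq, hικ _ hG, ← h0]
          exact CCData.Admissible.ccDist_le (CCData.Admissible.restrict hγ ht)
        have e2 := dist_triangle x₀ p (κ (γ t))
        have e3 := dist_triangle_right p q x₀
        rw [mem_closedBall] at hp hq
        rw [dist_comm x₀ p] at e2
        linarith [ht.2]
      have := CCData.Admissible.sub_le hγ hγΩ
        (fun j => (hXL j).continuousOn.mono hΩB) hgd hgL
      rw [h0, h1] at this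
      exact this.trans (mul_le_mul_of_nonneg_left hb.le L.2)
    have hlim : Tendsto (fun η : ℝ => (L : ℝ) * (dist p q + η)) (𝓝[>] 0)
        (𝓝 (L * (dist p q + 0))) :=
      ((continuous_const.mul (continuous_const.add continuous_id)).tendsto 0).mono_left
        nhdsWithin_le_nhds
    rw [add_zero] at hlim
    refine ge_of_tendsto hlim ?_
    filter_upwards [Ioc_mem_nhdsGT hr0] with η hηm
    exact hη η hηm.1 hηm.2
  refine LipschitzOnWith.of_dist_le_mul fun p hp q hq => ?_
  rw [Real.dist_eq, abs_le]
  have a1 := hone p hp q hq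
  have a2 := hone q hq p hp
  rw [dist_comm q p] at a2
  constructor <;> linarith
end
end
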